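/- arXiv:math/0006039 — 7 statements merged into one kernel-verified Lean document; each statement's English description precedes it below -/
import Mathlib

section
/- There is a constant C₅ depending only on C₀, n and d such that: if Q ⊂ R are concentric cubes and there is no (2,2^{d+1})-doubling cube of the form 2^k Q with k ≥ 0 and Q ⊂ 2^k Q ⊂ R, then δ(Q,R) ≤ C₅. -/
open MeasureTheory Metric Set Filter
open scoped ENNReal NNReal

noncomputable section

/-- The ambient Euclidean space `ℝ^d`. -/
abbrev Euc (d : ℕ) := EuclideanSpace ℝ (Fin d)

/-- A closed axis-parallel cube in `ℝ^d`, given by its center and side length. -/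
structure Cube (d : ℕ) where
  center : Euc d
  side : ℝ

namespace Cube

variable {d : ℕ}

/-- The set of points of the cube. -/
def toSet (Q : Cube d) : Set (Euc d) := {x | ∀ i, |x i - Q.center i| ≤ Q.side / 2}

/-- The concentric dilation `ρQ`. -/
def dilate (Q : Cube d) (ρ : ℝ) : Cube d := ⟨Q.center, ρ * Q.side⟩

/-- `Q.encl R` is the smallest cube concentric with `Q` containing `Q ∪ R`
(denoted `Q_R` in the paper). -/
def encl (Q R : Cube d) : Cube d :=
  ⟨Q.center, max Q.side (⨆ i, 2 * |R.center i - Q.center i| + R.side)⟩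

end Cube

variable {d : ℕ}

/-- The support of a measure: the points all of whose neighbourhoods have positive
measure. -/
def msupport (μ : Measure (Euc d)) : Set (Euc d) := {x | ∀ r > 0, 0 < μ (ball x r)}

/-- A cube of the lattice: positive side length and centered at a point of `supp μ`. -/
def IsCube (μ : Measure (Euc d)) (Q : Cube d) : Prop :=
  Q.center ∈ msupport μ ∧ 0 < Q.side

/-- The growth condition `μ(B(x,r)) ≤ C₀ rⁿ` for all `x ∈ supp μ`, `r > 0`. -/
def GrowthCond (μ : Measure (Euc d)) (C₀ n : ℝ) : Prop :=
  ∀ x ∈ msupport μ, ∀ r : ℝ, 0 < r → μ (ball x r) ≤ ENNReal.ofReal (C₀ * r ^ n)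

/-- The coefficient `δ(Q,R)`. -/
def cdelta (μ : Measure (Euc d)) (n : ℝ) (Q R : Cube d) : ℝ :=
  max (∫ x in (Q.encl R).toSet \ Q.toSet, ‖x - Q.center‖ ^ (-n) ∂μ)
      (∫ x in (R.encl Q).toSet \ R.toSet, ‖x - R.center‖ ^ (-n) ∂μ)

/-- An `(α,β)`-doubling cube: `μ(αQ) ≤ β μ(Q)`. -/
def IsDoublingWith (μ : Measure (Euc d)) (α β : ℝ) (Q : Cube d) : Prop :=
  μ (Q.dilate α).toSet ≤ ENNReal.ofReal β * μ Q.toSet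

/-- A `(2,2^(d+1))`-doubling cube. -/
def IsDoubling (μ : Measure (Euc d)) (Q : Cube d) : Prop :=
  μ (Q.dilate 2).toSet ≤ 2 ^ (d + 1) * μ Q.toSet

/-- An `n`-dimensional Calderón–Zygmund kernel with size constant `C₁`,
regularity constant `C₂` and regularity exponent `δ`. -/
structure IsCZKernel (d : ℕ) (n C₁ C₂ δ : ℝ) (k : Euc d → Euc d → ℝ) : Prop where
  measurable : Measurable (Function.uncurry k)
  size : ∀ x y, x ≠ y → |k x y| ≤ C₁ / ‖x - y‖ ^ n
  reg : ∀ x x' y : Euc d, ‖x - x'‖ ≤ ‖x - y‖ / 2 →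
    |k x y - k x' y| + |k y x - k y x'| ≤ C₂ * ‖x - x'‖ ^ δ / ‖x - y‖ ^ (n + δ)

/-- The truncated operator `T_ε`. -/
def trunc (μ : Measure (Euc d)) (k : Euc d → Euc d → ℝ) (ε : ℝ) (f : Euc d → ℝ)
    (x : Euc d) : ℝ :=
  ∫ y in {y | ε < dist x y}, k x y * f y ∂μ

/-- `T_ε χ_Q`, the truncated operator applied to the characteristic function of a
cube `Q`. -/
def truncCube (μ : Measure (Euc d)) (k : Euc d → Euc d → ℝ) (ε : ℝ) (Q : Cube d)
    (x : Euc d) : ℝ :=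
  ∫ y in {y | ε < dist x y} ∩ Q.toSet, k x y ∂μ

/-- The function representing `T_ε(1)` modulo additive constants, relative to a
base point `x₀`. -/
def truncOne (μ : Measure (Euc d)) (k : Euc d → Euc d → ℝ) (x₀ : Euc d) (ε : ℝ)
    (x : Euc d) : ℝ :=
  ∫ y, ({y | ε < dist x y}.indicator (fun z => k x z) y
      - {y | ε < dist x₀ y}.indicator (fun z => k x₀ z) y) ∂μ

/-- `f ∈ BMO_ρ(μ)` with constant `C`. -/
def BMOWith (μ : Measure (Euc d)) (ρ C : ℝ) (f : Euc d → ℝ) : Prop :=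
  ∀ Q : Cube d, IsCube μ Q →
    ∫ x in Q.toSet, |f x - ⨍ y in Q.toSet, f y ∂μ| ∂μ ≤ C * (μ (Q.dilate ρ).toSet).toReal

/-- `f ∈ RBMO(μ)` with constant `C`. -/
def RBMOWith (μ : Measure (Euc d)) (n C : ℝ) (f : Euc d → ℝ) : Prop :=
  (∀ Q : Cube d, IsCube μ Q → IsDoubling μ Q →
    ∫ x in Q.toSet, |f x - ⨍ y in Q.toSet, f y ∂μ| ∂μ ≤ C * (μ Q.toSet).toReal) ∧
  (∀ Q R : Cube d, IsCube μ Q → IsCube μ R → IsDoubling μ Q → IsDoubling μ R →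
    Q.toSet ⊆ R.toSet →
    |(⨍ x in Q.toSet, f x ∂μ) - ⨍ x in R.toSet, f x ∂μ| ≤ C * (1 + cdelta μ n Q R))

/-- The distance between two sets. -/
def setDist (s t : Set (Euc d)) : ℝ := sInf (Set.image2 dist s t)

/-- `δ(x, R)` for a point `x`, defined through the smallest cube centered at `x`
containing `R`; with values in `[0,∞]`. -/
def deltaPt (μ : Measure (Euc d)) (n : ℝ) (x : Euc d) (R : Cube d) : ℝ≥0∞ :=
  ∫⁻ y in ((Cube.mk x 0).encl R).toSet \ {x}, ENNReal.ofReal (‖y - x‖ ^ (-n)) ∂μ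

/-- `δ(Q, ℝ^d)`, with values in `[0,∞]`. -/
def deltaFull (μ : Measure (Euc d)) (n : ℝ) (Q : Cube d) : ℝ≥0∞ :=
  ∫⁻ x in Q.toSetᶜ, ENNReal.ofReal (‖x - Q.center‖ ^ (-n)) ∂μ

/-- The integral operator with kernel `s`. -/
def Sop (μ : Measure (Euc d)) (s : Euc d → Euc d → ℝ) (f : Euc d → ℝ) (x : Euc d) : ℝ :=
  ∫ y, s x y * f y ∂μ

/-- The difference operators `D_k = S_k - S_{k-1}`. -/
def Dop (μ : Measure (Euc d)) (s : ℤ → Euc d → Euc d → ℝ) (j : ℤ) (f : Euc d → ℝ) :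
    Euc d → ℝ :=
  fun x => Sop μ (s j) f x - Sop μ (s (j - 1)) f x

lemma aux_closed (Q : Cube d) : IsClosed Q.toSet := by
  have : Q.toSet = ⋂ i, {x : Euc d | |x i - Q.center i| ≤ Q.side / 2} := by
    ext x; simp [Cube.toSet]
  rw [this]
  refine isClosed_iInter fun i => ?_
  exact isClosed_le (by fun_prop) continuous_const

lemma aux_ball (z : Euc d) (t : ℝ) (ht : 0 < t) (hd : 0 < (d : ℝ)) :
    (Cube.mk z t).toSet ⊆ ball z (d * t) := by
  intro x hx
  rw [mem_ball, dist_eq_norm, EuclideanSpace.norm_eq]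
  have h1 : ∑ i, ‖(x - z) i‖ ^ 2 ≤ ∑ i : Fin d, (t / 2) ^ 2 := by
    refine Finset.sum_le_sum fun i _ => ?_
    have := hx i
    simp only [PiLp.sub_apply, Real.norm_eq_abs]
    gcongr
  simp only [Finset.sum_const, Finset.card_univ, Fintype.card_fin, nsmul_eq_mul] at h1
  have hd1 : (1 : ℝ) ≤ d := by
    have : 0 < d := by exact_mod_cast hd
    exact_mod_cast this
  rw [Real.sqrt_lt' (by positivity)]
  refine lt_of_le_of_lt h1 ?_
  have : 0 < t ^ 2 := by positivity
  have h3 : (d : ℝ) ≤ d ^ 2 := by nlinarith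
  have h4 : (d : ℝ) * t ^ 2 ≤ d ^ 2 * t ^ 2 := by gcongr
  have h5 : 0 < d * t ^ 2 := by positivity
  nlinarith

lemma aux_annulus (μ : Measure (Euc d)) (n : ℝ) (hn : 0 < n) (z : Euc d) (t : ℝ) (ht : 0 < t) :
    ∫⁻ x in (Cube.mk z (2 * t)).toSet \ (Cube.mk z t).toSet, ENNReal.ofReal (‖x - z‖ ^ (-n)) ∂μ
      ≤ ENNReal.ofReal ((t / 2) ^ (-n)) * μ (Cube.mk z (2 * t)).toSet := by
  calc _ ≤ ∫⁻ x in (Cube.mk z (2 * t)).toSet \ (Cube.mk z t).toSet,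
            ENNReal.ofReal ((t / 2) ^ (-n)) ∂μ := by
        refine setLIntegral_mono' ((aux_closed _).measurableSet.diff (aux_closed _).measurableSet) ?_
        intro x hx
        apply ENNReal.ofReal_le_ofReal
        have h2 : ¬ ∀ i, |x i - z i| ≤ t / 2 := hx.2
        push Not at h2
        obtain ⟨i, hi⟩ := h2
        have h3 : |x i - z i| ≤ ‖x - z‖ := by
          have := PiLp.norm_apply_le (x - z) i
          simpa using this
        exact Real.rpow_le_rpow_of_nonpos (by positivity) (by linarith) (by linarith)
    _ = ENNReal.ofReal ((t / 2) ^ (-n)) *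
          μ ((Cube.mk z (2 * t)).toSet \ (Cube.mk z t).toSet) := by
        rw [setLIntegral_const]
    _ ≤ _ := by gcongr; exact diff_subset

lemma aux_ind (μ : Measure (Euc d)) (n : ℝ) (hn : 0 < n) (hnd : n ≤ d) (z : Euc d) (q : ℝ)
    (hq : 0 < q) (N : ℕ)
    (h : ∀ j < N, 2 ^ (d + 1) * μ (Cube.mk z (2 ^ j * q)).toSet
      ≤ μ (Cube.mk z (2 * (2 ^ j * q))).toSet) :
    ∫⁻ x in (Cube.mk z (2 ^ N * q)).toSet \ (Cube.mk z q).toSet, ENNReal.ofReal (‖x - z‖ ^ (-n)) ∂μ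
      ≤ ENNReal.ofReal (2 * 4 ^ n * (2 ^ N * q) ^ (-n)) * μ (Cube.mk z (2 ^ N * q)).toSet := by
  induction N with
  | zero => simp
  | succ N ih =>
    have ih := ih fun j hj => h j (by omega)
    have hN := h N (by omega)
    have e : (2 : ℝ) ^ (N + 1) * q = 2 * (2 ^ N * q) := by ring
    rw [e]
    have ht : 0 < 2 ^ N * q := by positivity
    generalize 2 ^ N * q = t at *
    have hsub : (Cube.mk z (2 * t)).toSet \ (Cube.mk z q).toSet ⊆
        ((Cube.mk z t).toSet \ (Cube.mk z q).toSet) ∪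
        ((Cube.mk z (2 * t)).toSet \ (Cube.mk z t).toSet) := by
      intro x hx
      by_cases hxt : x ∈ (Cube.mk z t).toSet
      · exact Or.inl ⟨hxt, hx.2⟩
      · exact Or.inr ⟨hx.1, hxt⟩
    have ha : ENNReal.ofReal (2 * 4 ^ n * t ^ (-n)) =
        ENNReal.ofReal (2 * 4 ^ n * t ^ (-n) / 2 ^ (d + 1)) * 2 ^ (d + 1) := by
      have : (2 : ℝ≥0∞) ^ (d + 1) = ENNReal.ofReal (2 ^ (d + 1)) := by
        rw [ENNReal.ofReal_pow (by norm_num)]; simp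
      rw [this, ← ENNReal.ofReal_mul (by positivity)]
      congr 1
      field_simp
    calc _ ≤ _ := lintegral_mono_set hsub
      _ ≤ _ := lintegral_union_le _ _ _
      _ ≤ _ := add_le_add ih (aux_annulus μ n hn z t ht)
      _ ≤ ENNReal.ofReal (2 * 4 ^ n * t ^ (-n) / 2 ^ (d + 1)) * μ (Cube.mk z (2 * t)).toSet
          + ENNReal.ofReal ((t / 2) ^ (-n)) * μ (Cube.mk z (2 * t)).toSet := by
        rw [ha, mul_assoc]
        gcongr
      _ = ENNReal.ofReal (2 * 4 ^ n * t ^ (-n) / 2 ^ (d + 1) + (t / 2) ^ (-n))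
          * μ (Cube.mk z (2 * t)).toSet := by
        rw [ENNReal.ofReal_add (by positivity) (by positivity), add_mul]
      _ ≤ _ := by
        gcongr
        have h1 : (t / 2) ^ (-n) = t ^ (-n) * 2 ^ n := by
          rw [Real.div_rpow ht.le (by norm_num), Real.rpow_neg (by norm_num : (0:ℝ) ≤ 2),
            div_inv_eq_mul]
        have h2 : (2 * t) ^ (-n) = t ^ (-n) * ((2:ℝ) ^ n)⁻¹ := by
          rw [Real.mul_rpow (by norm_num) ht.le, Real.rpow_neg (by norm_num : (0:ℝ) ≤ 2), mul_comm]
        have h4 : (4 : ℝ) ^ n = 2 ^ n * 2 ^ n := by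
          rw [← Real.mul_rpow (by norm_num) (by norm_num)]; norm_num
        rw [h1, h2, h4]
        have hp : (0:ℝ) < 2 ^ n := by positivity
        have hle : (2 : ℝ) ^ n ≤ 2 ^ d := by
          rw [← Real.rpow_natCast]
          exact Real.rpow_le_rpow_of_exponent_le (by norm_num) hnd
        have hT : 0 < t ^ (-n) := by positivity
        generalize t ^ (-n) = T at *
        generalize (2 : ℝ) ^ n = P at *
        have e1 : 2 * (P * P) * (T * P⁻¹) = T * P + T * P := by field_simp; ring
        rw [e1]
        gcongr
        rw [div_le_iff₀ (by positivity), pow_succ]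
        have := mul_le_mul_of_nonneg_left hle (by positivity : 0 ≤ 2 * P * T)
        linarith

/-- If `Q ⊂ R` are concentric cubes with no doubling cube of the form `2^k Q`
between them, then `δ(Q,R) ≤ C₅`. -/
theorem cdelta_le_of_no_doubling_between {d : ℕ} (n C₀ : ℝ) (hn : 0 < n) (hnd : n ≤ d) :
    ∃ C₅ : ℝ, ∀ (μ : Measure (Euc d)) [IsLocallyFiniteMeasure μ], GrowthCond μ C₀ n →
      ∀ Q R : Cube d, IsCube μ Q → IsCube μ R →
      Q.center = R.center → Q.toSet ⊆ R.toSet →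
      (∀ j : ℕ, Q.toSet ⊆ (Q.dilate (2 ^ j)).toSet → (Q.dilate (2 ^ j)).toSet ⊆ R.toSet →
        ¬ IsDoubling μ (Q.dilate (2 ^ j))) →
      cdelta μ n Q R ≤ C₅ := by
  have hd : (0 : ℝ) < d := by linarith
  have hd' : 0 < d := by exact_mod_cast hd
  haveI : Nonempty (Fin d) := ⟨⟨0, hd'⟩⟩
  refine ⟨2 * 4 ^ n * (|C₀| * d ^ n), ?_⟩
  rintro μ _ hG ⟨z, q⟩ ⟨z', r⟩ hQ hR hc hQR hnot
  obtain rfl : z = z' := hc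
  have hq : 0 < q := hQ.2
  have hr : 0 < r := hR.2
  have hz : z ∈ msupport μ := hQ.1
  have hmono : ∀ {s t : ℝ}, s ≤ t → (Cube.mk z s).toSet ⊆ (Cube.mk z t).toSet := by
    intro s t hst x hx i
    have h1 : |x i - z i| ≤ s / 2 := hx i
    change |x i - z i| ≤ t / 2
    linarith
  have hqr : q ≤ r := by
    let x : Euc d := z + WithLp.toLp 2 (fun _ => q / 2)
    have hx : x ∈ (Cube.mk z q).toSet := by
      intro i
      simp [x, abs_of_pos (half_pos hq)]
    have := hQR hx ⟨0, hd'⟩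
    simp [x, abs_of_pos (half_pos hq)] at this
    linarith
  have e1 : (Cube.mk z q).encl (Cube.mk z r) = Cube.mk z r := by
    simp [Cube.encl, hqr]
  have e2 : (Cube.mk z r).encl (Cube.mk z q) = Cube.mk z r := by
    simp [Cube.encl, hqr]
  have hC : 0 ≤ 2 * 4 ^ n * (|C₀| * (d : ℝ) ^ n) := by positivity
  rw [cdelta, e1, e2]
  refine max_le ?_ (by simpa using hC)
  change ∫ x in (Cube.mk z r).toSet \ (Cube.mk z q).toSet, ‖x - z‖ ^ (-n) ∂μ ≤ _
  obtain ⟨N, hN1, hN2⟩ := exists_nat_pow_near ((one_le_div hq).2 hqr) (by norm_num : (1:ℝ) < 2)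
  rw [le_div_iff₀ hq] at hN1
  rw [div_lt_iff₀ hq] at hN2
  have hind := aux_ind μ n hn hnd z q hq (N + 1) (by
    intro j hj
    have hj2 : (2:ℝ) ^ j ≤ 2 ^ N := pow_le_pow_right₀ (by norm_num) (by omega)
    have := hnot j (hmono (le_mul_of_one_le_left hq.le (one_le_pow₀ (by norm_num))))
      (hmono (le_trans (by gcongr) hN1))
    exact (not_le.1 this).le)
  have hT : 0 < (2:ℝ) ^ (N + 1) * q := by positivity
  generalize (2:ℝ) ^ (N + 1) * q = T at *
  have hμ : μ (Cube.mk z T).toSet ≤ ENNReal.ofReal (|C₀| * (d * T) ^ n) :=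
    (measure_mono (aux_ball z T hT hd)).trans ((hG z hz _ (by positivity)).trans
      (ENNReal.ofReal_le_ofReal (by gcongr; exact le_abs_self _)))
  rw [integral_eq_lintegral_of_nonneg_ae (Eventually.of_forall fun x => by positivity)
    (by
      apply Measurable.aestronglyMeasurable
      fun_prop)]
  refine ENNReal.toReal_le_of_le_ofReal hC ?_
  calc _ ≤ _ := lintegral_mono_set (diff_subset_diff_left (hmono hN2.le))
    _ ≤ _ := hind
    _ ≤ ENNReal.ofReal (2 * 4 ^ n * T ^ (-n)) * ENNReal.ofReal (|C₀| * (d * T) ^ n) := by gcongr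
    _ = _ := by
      rw [← ENNReal.ofReal_mul (by positivity)]
      congr 1
      rw [Real.mul_rpow hd.le hT.le, Real.rpow_neg hT.le]
      have : 0 < T ^ n := by positivity
      field_simp
end
end

section
/- There is a constant C depending only on C₀, n and d such that for all cubes Q ⊂ R, δ(Q,R) ≤ C (1 + log(ℓ(R)/ℓ(Q))). -/
open MeasureTheory Metric Set Filter
open scoped ENNReal NNReal

noncomputable section

variable {d : ℕ}

lemma aux_annuli {d : ℕ} (n C₀ : ℝ) (μ : Measure (Euc d)) (hg : GrowthCond μ C₀ n)
    (hn : 0 < n) (z : Euc d) (hz : z ∈ msupport μ) (A : ℝ) (hA : 0 < A) (N : ℕ) :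
    ∫⁻ x in ball z (A * 2 ^ N) \ ball z A, ENNReal.ofReal (‖x - z‖ ^ (-n)) ∂μ
      ≤ N * ENNReal.ofReal (|C₀| * 2 ^ n) := by
  induction N with
  | zero => simp
  | succ N ih =>
    have hB : 0 < A * 2 ^ N := by positivity
    set B := A * 2 ^ N with hBdef
    have hB2 : A * 2 ^ (N + 1) = B * 2 := by rw [hBdef]; ring
    rw [hB2]
    have hsub : ball z (B * 2) \ ball z A ⊆
        (ball z B \ ball z A) ∪ (ball z (B * 2) \ ball z B) := by
      intro x hx
      by_cases h : x ∈ ball z B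
      · exact Or.inl ⟨h, hx.2⟩
      · exact Or.inr ⟨hx.1, h⟩
    have h2 : ∫⁻ x in ball z (B * 2) \ ball z B, ENNReal.ofReal (‖x - z‖ ^ (-n)) ∂μ
        ≤ ENNReal.ofReal (|C₀| * 2 ^ n) := by
      calc _ ≤ ∫⁻ x in ball z (B * 2) \ ball z B, ENNReal.ofReal (B ^ (-n)) ∂μ := by
            apply setLIntegral_mono' (measurableSet_ball.diff measurableSet_ball)
            intro x hx
            apply ENNReal.ofReal_le_ofReal
            have : B ≤ ‖x - z‖ := by
              have := hx.2
              rw [mem_ball, dist_eq_norm, not_lt] at this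
              exact this
            exact Real.rpow_le_rpow_of_nonpos hB this (by linarith)
        _ = ENNReal.ofReal (B ^ (-n)) * μ (ball z (B * 2) \ ball z B) := by
            rw [setLIntegral_const]
        _ ≤ ENNReal.ofReal (B ^ (-n)) * ENNReal.ofReal (|C₀| * (B * 2) ^ n) := by
            gcongr
            refine (measure_mono sdiff_subset).trans ((hg z hz _ (by positivity)).trans ?_)
            apply ENNReal.ofReal_le_ofReal
            gcongr
            exact le_abs_self _
        _ = ENNReal.ofReal (|C₀| * 2 ^ n) := by
            rw [← ENNReal.ofReal_mul (by positivity)]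
            congr 1
            rw [Real.mul_rpow hB.le (by norm_num), Real.rpow_neg hB.le]
            have : B ^ n ≠ 0 := (Real.rpow_pos_of_pos hB n).ne'
            field_simp
    calc _ ≤ ∫⁻ x in (ball z B \ ball z A) ∪ (ball z (B * 2) \ ball z B),
            ENNReal.ofReal (‖x - z‖ ^ (-n)) ∂μ := lintegral_mono_set hsub
      _ ≤ _ := lintegral_union_le _ _ _
      _ ≤ N * ENNReal.ofReal (|C₀| * 2 ^ n) + ENNReal.ofReal (|C₀| * 2 ^ n) := add_le_add ih h2
      _ = _ := by push_cast; ring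

lemma aux_cube {d : ℕ} (n C₀ : ℝ) (hd : 1 ≤ d) (μ : Measure (Euc d)) (hg : GrowthCond μ C₀ n)
    (hn : 0 < n) (Q P : Cube d) (hQ : IsCube μ Q) (r : ℝ) (hr : Q.side ≤ r)
    (hP : P.side ≤ 2 * r) (hc : P.center = Q.center) :
    ∫ x in P.toSet \ Q.toSet, ‖x - Q.center‖ ^ (-n) ∂μ
      ≤ ((3 + 2 * Real.log (4 * d)) * (|C₀| * 2 ^ n)) * (1 + Real.log (r / Q.side)) := by
  obtain ⟨hz, ha⟩ := hQ
  set z := Q.center with hzdef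
  set a := Q.side with hadef
  have hr0 : 0 < r := ha.trans_le hr
  have hd1 : (1 : ℝ) ≤ d := by exact_mod_cast hd
  have hd0 : (0 : ℝ) < d := by linarith
  set t := 4 * d * (r / a) with ht
  have hra : 1 ≤ r / a := (one_le_div ha).2 hr
  have ht0 : 0 < t := by positivity
  have ht1 : 1 ≤ t := by rw [ht]; nlinarith
  set N := ⌈Real.logb 2 t⌉₊ with hN
  have hN1 : t ≤ 2 ^ N := by
    rw [← Real.rpow_natCast, ← Real.logb_le_iff_le_rpow (by norm_num) ht0]
    exact Nat.le_ceil _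
  have hL : 0 ≤ Real.log (r / a) := Real.log_nonneg hra
  have hL4 : 0 ≤ Real.log (4 * d) := Real.log_nonneg (by linarith)
  have hN2 : (N : ℝ) ≤ (3 + 2 * Real.log (4 * d)) * (1 + Real.log (r / a)) := by
    have h1 : (N : ℝ) < Real.logb 2 t + 1 :=
      Nat.ceil_lt_add_one (Real.logb_nonneg (by norm_num) ht1)
    have h2 : Real.logb 2 t ≤ 2 * Real.log t := by
      rw [Real.logb, div_le_iff₀ (Real.log_pos (by norm_num))]
      have := Real.log_two_gt_d9
      nlinarith [Real.log_nonneg ht1]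
    have h3 : Real.log t = Real.log (4 * d) + Real.log (r / a) := by
      rw [ht, Real.log_mul (by positivity) (by positivity)]
    nlinarith [mul_nonneg hL hL4]
  have hsub : P.toSet \ Q.toSet ⊆ ball z (a / 2 * 2 ^ N) \ ball z (a / 2) := by
    rintro x ⟨hx1, hx2⟩
    constructor
    · rw [mem_ball, dist_eq_norm]
      have hle : ‖x - z‖ ≤ d * r := by
        refine (sq_le_sq₀ (norm_nonneg _) (by positivity)).1 ?_
        rw [EuclideanSpace.norm_sq_eq]
        calc ∑ i, ‖(x - z) i‖ ^ 2 ≤ ∑ i : Fin d, r ^ 2 := by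
              apply Finset.sum_le_sum
              intro i _
              have := hx1 i
              rw [hc] at this
              have h5 : ‖(x - z) i‖ ≤ r := by
                rw [Real.norm_eq_abs, PiLp.sub_apply]
                linarith
              gcongr
          _ = d * r ^ 2 := by simp
          _ ≤ (d * r) ^ 2 := by
              have : 0 < r ^ 2 := by positivity
              nlinarith [mul_nonneg (mul_nonneg hd0.le (sub_nonneg.2 hd1)) this.le]
      have : a / 2 * t = 2 * (d * r) := by rw [ht]; field_simp; ring
      have h6 : a / 2 * t ≤ a / 2 * 2 ^ N := by gcongr
      have : 0 < d * r := by positivity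
      linarith
    · intro hx
      apply hx2
      intro i
      rw [mem_ball, dist_eq_norm] at hx
      have := PiLp.norm_apply_le (x - z) i
      rw [Real.norm_eq_abs, PiLp.sub_apply] at this
      linarith
  have hmain := (lintegral_mono_set (μ := μ)
    (f := fun x => ENNReal.ofReal (‖x - z‖ ^ (-n))) hsub).trans
    (aux_annuli n C₀ μ hg hn z hz (a / 2) (by positivity) N)
  have hK : 0 ≤ |C₀| * 2 ^ n := by positivity
  rw [integral_eq_lintegral_of_nonneg_ae (Eventually.of_forall fun x => by positivity)
    (Measurable.aestronglyMeasurable (by fun_prop))]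
  calc _ ≤ (N * ENNReal.ofReal (|C₀| * 2 ^ n)).toReal :=
        ENNReal.toReal_mono (ENNReal.mul_ne_top (ENNReal.natCast_ne_top N) ENNReal.ofReal_ne_top) hmain
    _ = N * (|C₀| * 2 ^ n) := by
        rw [ENNReal.toReal_mul, ENNReal.toReal_ofReal hK]; simp
    _ ≤ ((3 + 2 * Real.log (4 * d)) * (1 + Real.log (r / a))) * (|C₀| * 2 ^ n) := by gcongr
    _ = _ := by ring

/-- For cubes `Q ⊂ R`, `δ(Q,R) ≤ C (1 + log(ℓ(R)/ℓ(Q)))`. -/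
theorem cdelta_le_log {d : ℕ} (n C₀ : ℝ) (hn : 0 < n) (hnd : n ≤ d) :
    ∃ C : ℝ, ∀ (μ : Measure (Euc d)) [IsLocallyFiniteMeasure μ], GrowthCond μ C₀ n →
      ∀ Q R : Cube d, IsCube μ Q → IsCube μ R → Q.toSet ⊆ R.toSet →
      cdelta μ n Q R ≤ C * (1 + Real.log (R.side / Q.side)) := by
  have hd : 1 ≤ d := by
    rcases Nat.eq_zero_or_pos d with h | h
    · subst h; simp at hnd; linarith
    · exact h
  have : Nonempty (Fin d) := ⟨⟨0, hd⟩⟩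
  refine ⟨(3 + 2 * Real.log (4 * d)) * (|C₀| * 2 ^ n), ?_⟩
  intro μ _ hg Q R hQ hR hQR
  have hd1 : (1 : ℝ) ≤ d := by exact_mod_cast hd
  have hc : ∀ i, |Q.center i - R.center i| ≤ R.side / 2 := by
    have : Q.center ∈ Q.toSet := by
      intro i
      have := hQ.2
      simp; positivity
    exact hQR this
  have hs : Q.side ≤ R.side := by
    let i0 : Fin d := ⟨0, hd⟩
    have hp : Q.center + EuclideanSpace.single i0 (Q.side / 2) ∈ Q.toSet := by
      intro i
      have := hQ.2
      by_cases h : i = i0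
      · subst h; simp; exact (abs_of_pos (half_pos this)).le
      · simp [h]; positivity
    have hm : Q.center - EuclideanSpace.single i0 (Q.side / 2) ∈ Q.toSet := by
      intro i
      have := hQ.2
      by_cases h : i = i0
      · subst h; simp; exact (abs_of_pos (half_pos this)).le
      · simp [h]; positivity
    have h1 := hQR hp i0
    have h2 := hQR hm i0
    simp at h1 h2
    rw [abs_le] at h1 h2
    linarith [h1.2, h2.1]
  have hL : 0 ≤ Real.log (R.side / Q.side) := Real.log_nonneg ((one_le_div hQ.2).2 hs)
  have hL4 : 0 ≤ Real.log (4 * d) := Real.log_nonneg (by linarith)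
  apply max_le
  · apply aux_cube n C₀ hd μ hg hn Q (Q.encl R) hQ R.side hs _ rfl
    apply max_le (by linarith [hR.2])
    apply ciSup_le
    intro i
    have := hc i
    rw [abs_sub_comm] at this
    linarith
  · refine (aux_cube n C₀ hd μ hg hn R (R.encl Q) hR R.side le_rfl ?_ rfl).trans ?_
    · apply max_le (by linarith [hR.2])
      apply ciSup_le
      intro i
      have := hc i
      linarith
    · rw [div_self hR.2.ne', Real.log_one]
      gcongr
end
end

section
/- There is a constant ε₀ depending only on C₀, n and d such that for all cubes P ⊂ Q ⊂ R, |δ(P,R) − (δ(P,Q) + δ(Q,R))| ≤ ε₀. Moreover, if P and Q are concentric, then δ(P,R) = δ(P,Q) + δ(Q,R) exactly. -/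
open MeasureTheory Metric Set Filter
open scoped ENNReal NNReal

noncomputable section

variable {d : ℕ}

namespace QA

lemma coord_le {d : ℕ} (x : Euc d) (i : Fin d) : |x i| ≤ ‖x‖ := by
  simpa using PiLp.norm_apply_le x i

lemma norm_le_sqrt {d : ℕ} (x : Euc d) (a : ℝ) (ha : 0 ≤ a) (h : ∀ i, |x i| ≤ a) :
    ‖x‖ ≤ √d * a := by
  rw [EuclideanSpace.norm_eq]
  apply Real.sqrt_le_iff.2
  refine ⟨by positivity, ?_⟩
  rw [mul_pow, Real.sq_sqrt (by positivity)]
  calc ∑ i, ‖x i‖ ^ 2 ≤ ∑ _i : Fin d, a ^ 2 := by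
        apply Finset.sum_le_sum
        intro i _
        have := h i
        rw [Real.norm_eq_abs]
        gcongr
    _ = d * a ^ 2 := by simp

lemma norm_le_of_mem {d : ℕ} {Q : Cube d} {x : Euc d} (hs : 0 ≤ Q.side) (h : x ∈ Q.toSet) :
    ‖x - Q.center‖ ≤ √d * (Q.side / 2) :=
  norm_le_sqrt _ _ (by linarith) (fun i => by simpa using h i)

lemma lt_norm_of_not_mem {d : ℕ} {Q : Cube d} {x : Euc d} (h : x ∉ Q.toSet) :
    Q.side / 2 < ‖x - Q.center‖ := by
  simp only [Cube.toSet, mem_ofPred_eq, not_forall, not_le] at h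
  obtain ⟨i, hi⟩ := h
  have := coord_le (x - Q.center) i
  simp only [PiLp.sub_apply] at this
  linarith

lemma sub_of_subset {d : ℕ} {P Q : Cube d} (hs : 0 < P.side) (h : P.toSet ⊆ Q.toSet) (i : Fin d) :
    2 * |P.center i - Q.center i| + P.side ≤ Q.side := by
  have key : ∀ t : ℝ, |t| ≤ P.side / 2 → |P.center i + t - Q.center i| ≤ Q.side / 2 := by
    intro t ht
    have hm : P.center + EuclideanSpace.single i t ∈ P.toSet := by
      intro j
      by_cases hj : j = i
      · subst hj; simpa using ht
      · simp [hj]; linarith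
    simpa using h hm i
  have h1 := key (P.side / 2) (by rw [abs_of_pos]; linarith)
  have h2 := key (-(P.side / 2)) (by rw [abs_neg, abs_of_pos]; linarith)
  rw [abs_le] at h1 h2
  have : |P.center i - Q.center i| ≤ Q.side / 2 - P.side / 2 := by
    rw [abs_le]; constructor <;> linarith
  linarith

lemma isClosed_toSet {d : ℕ} (Q : Cube d) : IsClosed Q.toSet := by
  have : Q.toSet = ⋂ i, {x : Euc d | |x i - Q.center i| ≤ Q.side / 2} := by
    ext x; simp [Cube.toSet]
  rw [this]
  refine isClosed_iInter fun i => isClosed_le ?_ continuous_const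
  fun_prop

lemma toSet_mono {d : ℕ} {P Q : Cube d} (hc : P.center = Q.center) (hs : P.side ≤ Q.side) :
    P.toSet ⊆ Q.toSet := by
  intro x hx i
  have := hx i
  rw [hc] at this
  linarith

lemma measure_toSet_lt_top {d : ℕ} (μ : Measure (Euc d)) [IsLocallyFiniteMeasure μ] (Q : Cube d) :
    μ Q.toSet < ∞ := by
  have : Bornology.IsBounded Q.toSet := by
    refine (isBounded_closedBall (x := Q.center) (r := √d * (|Q.side| / 2))).subset ?_
    intro x hx
    rw [mem_closedBall, dist_eq_norm]
    apply norm_le_sqrt _ _ (by positivity)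
    intro i
    have h1 := hx i
    have h2 := le_abs_self Q.side
    simp only [PiLp.sub_apply]
    linarith
  exact this.measure_lt_top

lemma integrableOn_diff {d : ℕ} (μ : Measure (Euc d)) [IsLocallyFiniteMeasure μ] {n : ℝ}
    (hn : 0 < n) (X P : Cube d) (hs : 0 < P.side) :
    IntegrableOn (fun x => ‖x - P.center‖ ^ (-n)) (X.toSet \ P.toSet) μ := by
  have hm : MeasurableSet (X.toSet \ P.toSet) :=
    (isClosed_toSet X).measurableSet.diff (isClosed_toSet P).measurableSet
  refine Measure.integrableOn_of_bounded (M := (P.side / 2) ^ (-n)) ?_ ?_ ?_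
  · exact ((measure_mono sdiff_subset).trans_lt (measure_toSet_lt_top μ X)).ne
  · exact (Measurable.pow_const (by fun_prop) _).aestronglyMeasurable
  · filter_upwards [ae_restrict_mem hm] with x hx
    rw [Real.norm_eq_abs, abs_of_nonneg (by positivity)]
    exact Real.rpow_le_rpow_of_nonpos (by positivity) (lt_norm_of_not_mem hx.2).le (by linarith)

/-- The size relation between `P` and `Q` equivalent to containment. -/
def Inside {d : ℕ} (P Q : Cube d) : Prop := ∀ i, 2 * |P.center i - Q.center i| + P.side ≤ Q.side

lemma le_encl_side {d : ℕ} (P Q : Cube d) (i : Fin d) :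
    2 * |Q.center i - P.center i| + Q.side ≤ (P.encl Q).side :=
  (le_ciSup (f := fun i => 2 * |Q.center i - P.center i| + Q.side)
    (Set.finite_range _).bddAbove i).trans (le_max_right _ _)

lemma side_le_encl {d : ℕ} (P Q : Cube d) : P.side ≤ (P.encl Q).side := le_max_left _ _

lemma encl_side_le {d : ℕ} [Nonempty (Fin d)] (P Q : Cube d) (a : ℝ) (h : P.side ≤ a)
    (h' : ∀ i, 2 * |Q.center i - P.center i| + Q.side ≤ a) : (P.encl Q).side ≤ a :=
  max_le h (ciSup_le h')

lemma Inside.side_le {d : ℕ} [Nonempty (Fin d)] {P Q : Cube d} (h : Inside P Q) :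
    P.side ≤ Q.side := by
  have := h (Classical.arbitrary _)
  have := abs_nonneg (P.center (Classical.arbitrary _) - Q.center (Classical.arbitrary _))
  linarith

lemma side_le_encl' {d : ℕ} [Nonempty (Fin d)] (P Q : Cube d) : Q.side ≤ (P.encl Q).side := by
  have := le_encl_side P Q (Classical.arbitrary _)
  have := abs_nonneg (Q.center (Classical.arbitrary _) - P.center (Classical.arbitrary _))
  linarith

lemma Inside.trans {d : ℕ} {P Q R : Cube d} (h : Inside P Q) (h' : Inside Q R) : Inside P R := by
  intro i
  have := h i
  have := h' i
  have := abs_sub_le (P.center i) (Q.center i) (R.center i)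
  linarith

lemma Inside.encl_self {d : ℕ} [Nonempty (Fin d)] {P Q : Cube d} (h : Inside P Q) :
    Q.encl P = Q := by
  have : (Q.encl P).side = Q.side :=
    le_antisymm (encl_side_le _ _ _ le_rfl h) (side_le_encl _ _)
  cases Q
  simp only [Cube.encl] at *
  simp [this]

lemma Inside.encl_le {d : ℕ} [Nonempty (Fin d)] {P Q : Cube d} (h : Inside P Q) (hs : 0 < P.side) :
    (P.encl Q).side ≤ 2 * Q.side := by
  have := h.side_le
  apply encl_side_le _ _ _ (by linarith)
  intro i
  have := h i
  rw [abs_sub_comm]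
  linarith

lemma encl_mono {d : ℕ} [Nonempty (Fin d)] {P Q R : Cube d} (h' : Inside Q R) :
    (P.encl Q).side ≤ (P.encl R).side := by
  apply encl_side_le _ _ _ (side_le_encl _ _)
  intro i
  have := h' i
  have := abs_sub_le (Q.center i) (R.center i) (P.center i)
  have := le_encl_side P R i
  linarith

lemma subset_encl {d : ℕ} (P Q : Cube d) : Q.toSet ⊆ (P.encl Q).toSet := by
  intro x hx i
  have := hx i
  have := le_encl_side P Q i
  have := abs_sub_le (x i) (Q.center i) (P.center i)
  show |x i - P.center i| ≤ _
  linarith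

lemma cdelta_eq {d : ℕ} [Nonempty (Fin d)] (μ : Measure (Euc d)) (n : ℝ) {P Q : Cube d}
    (h : Inside P Q) :
    cdelta μ n P Q = ∫ x in (P.encl Q).toSet \ P.toSet, ‖x - P.center‖ ^ (-n) ∂μ := by
  unfold cdelta
  rw [h.encl_self, sdiff_self, setIntegral_empty]
  exact max_eq_left (integral_nonneg fun x => by positivity)

lemma cdelta_split {d : ℕ} [Nonempty (Fin d)] (μ : Measure (Euc d)) [IsLocallyFiniteMeasure μ]
    {n : ℝ} (hn : 0 < n) {P Q R : Cube d} (hP : 0 < P.side) (h : Inside P Q) (h' : Inside Q R) :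
    cdelta μ n P R = cdelta μ n P Q +
      ∫ x in (P.encl R).toSet \ (P.encl Q).toSet, ‖x - P.center‖ ^ (-n) ∂μ := by
  rw [cdelta_eq μ n h, cdelta_eq μ n (h.trans h')]
  have e : (P.encl R).toSet \ P.toSet =
      ((P.encl Q).toSet \ P.toSet) ∪ ((P.encl R).toSet \ (P.encl Q).toSet) := by
    have h1 : P.toSet ⊆ (P.encl Q).toSet := toSet_mono rfl (side_le_encl _ _)
    have h2 : (P.encl Q).toSet ⊆ (P.encl R).toSet := toSet_mono rfl (encl_mono h')
    ext x
    have := @h1 x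
    have := @h2 x
    simp only [Set.mem_sdiff, mem_union]
    tauto
  rw [e, setIntegral_union]
  · exact disjoint_sdiff_right.mono_left sdiff_subset
  · exact (isClosed_toSet _).measurableSet.diff (isClosed_toSet _).measurableSet
  · exact integrableOn_diff μ hn _ _ hP
  · refine (integrableOn_diff μ hn (P.encl R) _ hP).mono_set ?_
    exact sdiff_subset_sdiff_right (toSet_mono rfl (side_le_encl _ _))

lemma ball_bound {d : ℕ} {μ : Measure (Euc d)} {C₀ n : ℝ} (hg : GrowthCond μ C₀ n)
    {z : Euc d} (hz : z ∈ msupport μ) {r : ℝ} (hr : 0 < r) :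
    μ (ball z r) ≤ ENNReal.ofReal (|C₀| * r ^ n) := by
  refine (hg z hz r hr).trans (ENNReal.ofReal_le_ofReal ?_)
  have := le_abs_self C₀
  gcongr

lemma tail_bound {d : ℕ} {μ : Measure (Euc d)} {C₀ n : ℝ} (hn : 0 < n) (hg : GrowthCond μ C₀ n)
    {z : Euc d} (hz : z ∈ msupport μ) {s : ℝ} (hs : 0 < s) :
    ∫⁻ x in {x | s ≤ ‖x - z‖}, ENNReal.ofReal (s * ‖x - z‖ ^ (-n - 1)) ∂μ ≤
      ENNReal.ofReal (|C₀| * 2 ^ n * 2) := by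
  let A : ℕ → Set (Euc d) := fun k => {x | 2 ^ k * s ≤ ‖x - z‖ ∧ ‖x - z‖ < 2 ^ (k + 1) * s}
  have hsub : {x : Euc d | s ≤ ‖x - z‖} ⊆ ⋃ k, A k := by
    intro x hx
    have hx' : 1 ≤ ‖x - z‖ / s := by rw [le_div_iff₀ hs]; simpa using hx
    obtain ⟨k, h1, h2⟩ := exists_nat_pow_near hx' (one_lt_two)
    rw [le_div_iff₀ hs] at h1
    rw [div_lt_iff₀ hs] at h2
    exact mem_iUnion.2 ⟨k, h1, h2⟩
  refine (lintegral_mono_set hsub).trans ((lintegral_iUnion_le _ _).trans ?_)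
  have hk : ∀ k, ∫⁻ x in A k, ENNReal.ofReal (s * ‖x - z‖ ^ (-n - 1)) ∂μ ≤
      ENNReal.ofReal (|C₀| * 2 ^ n * (1 / 2) ^ k) := by
    intro k
    have hpos : 0 < 2 ^ k * s := by positivity
    calc ∫⁻ x in A k, ENNReal.ofReal (s * ‖x - z‖ ^ (-n - 1)) ∂μ
        ≤ ∫⁻ x in A k, ENNReal.ofReal (s * (2 ^ k * s) ^ (-n - 1)) ∂μ := by
          refine setLIntegral_mono measurable_const fun x hx => ENNReal.ofReal_le_ofReal ?_
          refine mul_le_mul_of_nonneg_left ?_ hs.le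
          exact Real.rpow_le_rpow_of_nonpos hpos hx.1 (by linarith)
      _ = ENNReal.ofReal (s * (2 ^ k * s) ^ (-n - 1)) * μ (A k) := setLIntegral_const _ _
      _ ≤ ENNReal.ofReal (s * (2 ^ k * s) ^ (-n - 1)) *
            ENNReal.ofReal (|C₀| * (2 * (2 ^ k * s)) ^ n) := by
          gcongr
          refine (measure_mono ?_).trans (ball_bound hg hz (by positivity))
          intro x hx
          rw [mem_ball, dist_eq_norm]
          have := hx.2
          rw [pow_succ] at this
          linarith
      _ = ENNReal.ofReal (|C₀| * 2 ^ n * (1 / 2) ^ k) := by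
          rw [← ENNReal.ofReal_mul (by positivity)]
          congr 1
          rw [Real.mul_rpow (by norm_num) hpos.le, Real.rpow_sub hpos, Real.rpow_neg hpos.le,
            Real.rpow_one]
          have : (2 ^ k * s) ^ n ≠ 0 := (Real.rpow_pos_of_pos hpos n).ne'
          rw [one_div, inv_pow]
          field_simp
  refine (ENNReal.tsum_le_tsum hk).trans ?_
  rw [← ENNReal.ofReal_tsum_of_nonneg (fun k => by positivity)
    (summable_geometric_two.mul_left _), tsum_mul_left, tsum_geometric_two]

lemma const_bound {d : ℕ} {μ : Measure (Euc d)} {C₀ n : ℝ} (hg : GrowthCond μ C₀ n)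
    {z : Euc d} (hz : z ∈ msupport μ) {t M L : ℝ} (ht : 0 < t) (hM : 0 < M) (hL : 0 < L) :
    ∫⁻ _ in ball z (L * t), ENNReal.ofReal ((t / M) ^ (-n)) ∂μ ≤
      ENNReal.ofReal (|C₀| * (L * M) ^ n) := by
  rw [setLIntegral_const]
  calc _ ≤ ENNReal.ofReal ((t / M) ^ (-n)) * ENNReal.ofReal (|C₀| * (L * t) ^ n) := by
        gcongr
        exact ball_bound hg hz (by positivity)
    _ = _ := by
        rw [← ENNReal.ofReal_mul (by positivity)]
        congr 1
        rw [Real.rpow_neg (by positivity), Real.div_rpow ht.le hM.le, Real.mul_rpow hL.le ht.le,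
          Real.mul_rpow hL.le hM.le]
        have : t ^ n ≠ 0 := (Real.rpow_pos_of_pos ht n).ne'
        have : M ^ n ≠ 0 := (Real.rpow_pos_of_pos hM n).ne'
        field_simp

lemma rpow_diff {n u v M : ℝ} (hn : 0 < n) (hM : 1 ≤ M) (hv : 0 < v) (huv : v ≤ M * u) :
    |u ^ (-n) - v ^ (-n)| ≤ n * M ^ (n + 1) * v ^ (-n - 1) * |u - v| := by
  have hM0 : 0 < M := by linarith
  have ha : 0 < v / M := by positivity
  have := Convex.norm_image_sub_le_of_norm_hasDerivWithin_le (𝕜 := ℝ) (s := Ici (v / M))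
    (f := fun x : ℝ => x ^ (-n)) (f' := fun x => -n * x ^ (-n - 1)) (x := v) (y := u)
    (C := n * M ^ (n + 1) * v ^ (-n - 1)) ?_ ?_ (convex_Ici _) ?_ ?_
  · simpa [Real.norm_eq_abs] using this
  · intro x hx
    have hx0 : 0 < x := ha.trans_le hx
    exact (Real.hasDerivAt_rpow_const (Or.inl hx0.ne')).hasDerivWithinAt
  · intro x hx
    have hx0 : 0 < x := ha.trans_le hx
    rw [norm_mul, norm_neg, Real.norm_eq_abs, Real.norm_eq_abs, abs_of_pos hn,
      abs_of_nonneg (by positivity), mul_assoc]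
    refine mul_le_mul_of_nonneg_left ?_ hn.le
    refine (Real.rpow_le_rpow_of_nonpos ha hx (by linarith)).trans (le_of_eq ?_)
    rw [Real.div_rpow hv.le hM0.le, div_eq_mul_inv, ← Real.rpow_neg hM0.le, mul_comm]
    congr 2
    ring
  · exact div_le_self hv.le hM
  · rw [mem_Ici, div_le_iff₀ hM0]; linarith

lemma main_bound {d : ℕ} [Nonempty (Fin d)] (μ : Measure (Euc d)) [IsLocallyFiniteMeasure μ]
    {n C₀ : ℝ} (hn : 0 < n) (hg : GrowthCond μ C₀ n) {P Q R : Cube d} (hP : IsCube μ P)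
    (hQ : IsCube μ Q) (hR : IsCube μ R) (h : Inside P Q) (h' : Inside Q R) :
    |(∫ x in (P.encl R).toSet \ (P.encl Q).toSet, ‖x - P.center‖ ^ (-n) ∂μ) -
      ∫ x in (Q.encl R).toSet \ Q.toSet, ‖x - Q.center‖ ^ (-n) ∂μ| ≤
    (n * (1 + √d) ^ (n + 1) * √d) * (|C₀| * 2 ^ n * 2) +
      3 * (|C₀| * (2 * √d * (2 * (1 + √d))) ^ n) := by
  obtain ⟨hPs, hP0⟩ := hP
  obtain ⟨hQs, hQ0⟩ := hQ
  obtain ⟨hRs, hR0⟩ := hR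
  have hd : 1 ≤ √(d : ℝ) := by
    rw [Real.one_le_sqrt]
    exact_mod_cast Fin.pos_iff_nonempty.2 inferInstance
  set K := √(d : ℝ) with hK
  set M := 1 + K with hM
  set s := Q.side / 2 with hs
  have hs0 : 0 < s := by positivity
  have hM0 : 0 < M := by positivity
  set c := n * M ^ (n + 1) * K with hc
  have hc0 : 0 ≤ c := by positivity
  set A := (P.encl R).toSet \ (P.encl Q).toSet with hA
  set B := (Q.encl R).toSet \ Q.toSet with hB
  have mA : MeasurableSet A :=
    (isClosed_toSet _).measurableSet.diff (isClosed_toSet _).measurableSet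
  have mB : MeasurableSet B :=
    (isClosed_toSet _).measurableSet.diff (isClosed_toSet _).measurableSet
  have iA : IntegrableOn (fun x => ‖x - P.center‖ ^ (-n)) A μ :=
    (integrableOn_diff μ hn (P.encl R) _ hP0).mono_set
      (sdiff_subset_sdiff_right (toSet_mono rfl (side_le_encl _ _)))
  have iB : IntegrableOn (fun x => ‖x - Q.center‖ ^ (-n)) B μ := integrableOn_diff μ hn _ _ hQ0
  rw [← integral_indicator mA, ← integral_indicator mB,
    ← integral_sub (iA.integrable_indicator mA) (iB.integrable_indicator mB), ← Real.norm_eq_abs]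
  refine (norm_integral_le_lintegral_norm _).trans (ENNReal.toReal_le_of_le_ofReal (by positivity) ?_)
  -- the four majorants
  let T : Set (Euc d) := {x | s ≤ ‖x - Q.center‖}
  let g : Euc d → ℝ≥0∞ := fun x => ENNReal.ofReal c * ENNReal.ofReal (s * ‖x - Q.center‖ ^ (-n - 1))
  let k : ℝ → Euc d → ℝ≥0∞ := fun t _ => ENNReal.ofReal ((t / (2 * M)) ^ (-n))
  have mT : MeasurableSet T := (isClosed_le continuous_const (by fun_prop)).measurableSet
  have mg0 : Measurable fun x : Euc d => ENNReal.ofReal (s * ‖x - Q.center‖ ^ (-n - 1)) :=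
    ENNReal.measurable_ofReal.comp (measurable_const.mul (Measurable.pow_const (by fun_prop) _))
  have mg : Measurable g := mg0.const_mul _
  have mk : ∀ t, Measurable (k t) := fun t => measurable_const
  have hPQ : ‖P.center - Q.center‖ ≤ K * s := by
    apply norm_le_sqrt _ _ hs0.le
    intro i
    have := h i
    simp only [PiLp.sub_apply]
    linarith
  have hPR := (h.trans h').encl_le hP0
  have hQR := h'.encl_le hQ0
  have hPQ' := h.encl_le hP0
  have big : ∀ {a b t : ℝ}, s ≤ a → b - a ≤ K * s → t / 2 ≤ b → 0 < t →
      a ^ (-n) ≤ (t / (2 * M)) ^ (-n) := by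
    intro a b t h1 h2 h3 ht
    refine Real.rpow_le_rpow_of_nonpos (by positivity) ?_ (by linarith)
    rw [div_le_iff₀ (by positivity)]
    nlinarith
  have inball : ∀ {S : Cube d} {x : Euc d} {t : ℝ}, x ∈ S.toSet → 0 ≤ S.side → S.side ≤ 2 * t →
      0 < t → x ∈ ball S.center (2 * K * t) := by
    intro S x t hx hS hSt ht
    have := norm_le_of_mem hS hx
    rw [mem_ball, dist_eq_norm]
    nlinarith
  have pw : ∀ x, ENNReal.ofReal ‖A.indicator (fun x => ‖x - P.center‖ ^ (-n)) x -
      B.indicator (fun x => ‖x - Q.center‖ ^ (-n)) x‖ ≤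
      T.indicator g x + ((ball P.center (2 * K * R.side)).indicator (k R.side) x +
        ((ball Q.center (2 * K * R.side)).indicator (k R.side) x +
          (ball P.center (2 * K * Q.side)).indicator (k Q.side) x)) := by
    intro x
    have t1 : ‖x - P.center‖ - ‖x - Q.center‖ ≤ K * s := by
      have := norm_sub_norm_le (x - P.center) (x - Q.center)
      rw [sub_sub_sub_cancel_left, norm_sub_rev Q.center P.center] at this
      linarith
    have t2 : ‖x - Q.center‖ - ‖x - P.center‖ ≤ K * s := by
      have := norm_sub_norm_le (x - Q.center) (x - P.center)
      rw [sub_sub_sub_cancel_left] at this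
      linarith
    have hAs : x ∈ A → s ≤ ‖x - P.center‖ := by
      intro hx
      have h1 : (P.encl Q).side / 2 < ‖x - P.center‖ := lt_norm_of_not_mem hx.2
      have := side_le_encl' P Q
      linarith
    have hBs : x ∉ Q.toSet → s ≤ ‖x - Q.center‖ := fun hx => (lt_norm_of_not_mem hx).le
    by_cases hxA : x ∈ A
    · have hxQ : x ∉ Q.toSet := fun hx => hxA.2 (subset_encl P Q hx)
      by_cases hxB : x ∈ B
      · -- both
        refine le_trans ?_ le_self_add
        have hT : x ∈ T := hBs hxQ
        rw [indicator_of_mem hxA, indicator_of_mem hxB, indicator_of_mem hT,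
          show g x = ENNReal.ofReal c * ENNReal.ofReal (s * ‖x - Q.center‖ ^ (-n - 1)) from rfl,
          ← ENNReal.ofReal_mul hc0, Real.norm_eq_abs]
        apply ENNReal.ofReal_le_ofReal
        have hu := hAs hxA
        have hv := hBs hxQ
        refine (rpow_diff (M := M) hn (by linarith) (by linarith) (by nlinarith)).trans ?_
        have : |‖x - P.center‖ - ‖x - Q.center‖| ≤ K * s := abs_le.2 ⟨by linarith, t1⟩
        calc _ ≤ n * M ^ (n + 1) * ‖x - Q.center‖ ^ (-n - 1) * (K * s) := by gcongr
          _ = _ := by rw [hc]; ring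
      · -- only A
        have hx3 : x ∉ (Q.encl R).toSet := fun hx => hxB ⟨hx, hxQ⟩
        have h1 : (Q.encl R).side / 2 < ‖x - Q.center‖ := lt_norm_of_not_mem hx3
        have h2 := side_le_encl' Q R
        have hb : x ∈ ball P.center (2 * K * R.side) :=
          inball (S := P.encl R) hxA.1 (hP0.le.trans (side_le_encl _ _)) hPR hR0
        refine le_trans ?_ (le_add_self.trans' le_self_add)
        rw [indicator_of_mem hxA, indicator_of_notMem hxB, indicator_of_mem hb, sub_zero,
          Real.norm_eq_abs, abs_of_nonneg (by positivity)]
        exact ENNReal.ofReal_le_ofReal (big (hAs hxA) t2 (by linarith) hR0)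
    · by_cases hxB : x ∈ B
      · rw [indicator_of_notMem hxA, indicator_of_mem hxB, zero_sub, norm_neg,
          Real.norm_eq_abs, abs_of_nonneg (by positivity)]
        by_cases hx4 : x ∈ (P.encl Q).toSet
        · have hb : x ∈ ball P.center (2 * K * Q.side) :=
            inball (S := P.encl Q) hx4 (hP0.le.trans (side_le_encl _ _)) hPQ' hQ0
          refine le_trans ?_ (le_add_self.trans' (le_add_self.trans' le_add_self))
          rw [indicator_of_mem hb]
          refine ENNReal.ofReal_le_ofReal (big (b := ‖x - Q.center‖) (hBs hxB.2) ?_ (hBs hxB.2) hQ0)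
          rw [sub_self]; positivity
        · have hx3 : x ∉ (P.encl R).toSet := fun hx => hxA ⟨hx, hx4⟩
          have h1 : (P.encl R).side / 2 < ‖x - P.center‖ := lt_norm_of_not_mem hx3
          have h2 := side_le_encl' P R
          have hb : x ∈ ball Q.center (2 * K * R.side) :=
            inball (S := Q.encl R) hxB.1 (hQ0.le.trans (side_le_encl _ _)) hQR hR0
          refine le_trans ?_ (le_add_self.trans' (le_add_self.trans' le_self_add))
          rw [indicator_of_mem hb]
          exact ENNReal.ofReal_le_ofReal (big (hBs hxB.2) t1 (by linarith) hR0)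
      · rw [indicator_of_notMem hxA, indicator_of_notMem hxB]
        simp
  refine (lintegral_mono pw).trans ?_
  rw [lintegral_add_left (mg.indicator mT), lintegral_add_left ((mk _).indicator measurableSet_ball),
    lintegral_add_left ((mk _).indicator measurableSet_ball), lintegral_indicator mT,
    lintegral_indicator measurableSet_ball, lintegral_indicator measurableSet_ball,
    lintegral_indicator measurableSet_ball]
  have hW : 0 ≤ |C₀| * (2 * K * (2 * M)) ^ n := by positivity
  have e : c * (|C₀| * 2 ^ n * 2) + 3 * (|C₀| * (2 * K * (2 * M)) ^ n) =
      c * (|C₀| * 2 ^ n * 2) + (|C₀| * (2 * K * (2 * M)) ^ n + (|C₀| * (2 * K * (2 * M)) ^ n +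
        |C₀| * (2 * K * (2 * M)) ^ n)) := by ring
  rw [e, ENNReal.ofReal_add (by positivity) (by positivity), ENNReal.ofReal_add hW (by positivity),
    ENNReal.ofReal_add hW hW]
  have hK0 : 0 < 2 * K := by positivity
  have h2M : 0 < 2 * M := by positivity
  refine add_le_add ?_ (add_le_add (const_bound hg hPs hR0 h2M hK0)
    (add_le_add (const_bound hg hQs hR0 h2M hK0) (const_bound hg hPs hQ0 h2M hK0)))
  show ∫⁻ x in T, ENNReal.ofReal c * ENNReal.ofReal (s * ‖x - Q.center‖ ^ (-n - 1)) ∂μ ≤ _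
  rw [lintegral_const_mul _ mg0, ENNReal.ofReal_mul hc0]
  gcongr
  exact tail_bound hn hg hQs hs0

end QA

/-- Quasi-additivity of `δ`: for cubes `P ⊂ Q ⊂ R`,
`|δ(P,R) − (δ(P,Q) + δ(Q,R))| ≤ ε₀`, with exact equality when `P` and `Q` are
concentric. -/
theorem cdelta_quasi_additive {d : ℕ} (n C₀ : ℝ) (hn : 0 < n) (hnd : n ≤ d) :
    ∃ ε₀ : ℝ, ∀ (μ : Measure (Euc d)) [IsLocallyFiniteMeasure μ], GrowthCond μ C₀ n →
      (∀ P Q R : Cube d, IsCube μ P → IsCube μ Q → IsCube μ R →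
        P.toSet ⊆ Q.toSet → Q.toSet ⊆ R.toSet →
        |cdelta μ n P R - (cdelta μ n P Q + cdelta μ n Q R)| ≤ ε₀) ∧
      (∀ P Q R : Cube d, IsCube μ P → IsCube μ Q → IsCube μ R →
        P.toSet ⊆ Q.toSet → Q.toSet ⊆ R.toSet → P.center = Q.center →
        cdelta μ n P R = cdelta μ n P Q + cdelta μ n Q R) := by
  have hd : 0 < d := by
    have : (0 : ℝ) < d := hn.trans_le hnd
    exact_mod_cast this
  have : Nonempty (Fin d) := ⟨⟨0, hd⟩⟩
  refine ⟨(n * (1 + √d) ^ (n + 1) * √d) * (|C₀| * 2 ^ n * 2) +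
      3 * (|C₀| * (2 * √d * (2 * (1 + √d))) ^ n), ?_⟩
  intro μ _ hg
  refine ⟨?_, ?_⟩
  · intro P Q R hP hQ hR hPQ hQR
    have h : QA.Inside P Q := QA.sub_of_subset hP.2 hPQ
    have h' : QA.Inside Q R := QA.sub_of_subset hQ.2 hQR
    rw [QA.cdelta_split μ hn hP.2 h h', QA.cdelta_eq μ n h', add_sub_add_left_eq_sub]
    exact QA.main_bound μ hn hg hP hQ hR h h'
  · intro P Q R hP hQ hR hPQ hQR hc
    have h : QA.Inside P Q := QA.sub_of_subset hP.2 hPQ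
    have h' : QA.Inside Q R := QA.sub_of_subset hQ.2 hQR
    rw [QA.cdelta_split μ hn hP.2 h h', QA.cdelta_eq μ n h']
    have e1 : (P.encl Q).toSet = Q.toSet := by
      apply Subset.antisymm
      · refine QA.toSet_mono hc (QA.encl_side_le _ _ _ h.side_le ?_)
        intro i
        rw [hc]; simp
      · exact QA.subset_encl P Q
    have e2 : (P.encl R).toSet = (Q.encl R).toSet := by
      apply Subset.antisymm
      · refine QA.toSet_mono hc (QA.encl_side_le _ _ _ (h.side_le.trans (QA.side_le_encl _ _)) ?_)
        intro i
        rw [hc]; exact QA.le_encl_side Q R i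
      · refine QA.toSet_mono hc.symm (QA.encl_side_le _ _ _
          (h'.side_le.trans (QA.side_le_encl' _ _)) ?_)
        intro i
        rw [← hc]; exact QA.le_encl_side P R i
    rw [e1, e2, hc]
end
end

section
/- There is a constant C₆ depending only on C₀, n and d such that for all cubes P, Q, R, δ(P,R) ≤ C₆ + δ(P,Q) + δ(Q,R). -/
open MeasureTheory Metric Set Filter
open scoped ENNReal NNReal

noncomputable section

variable {d : ℕ}

lemma aux_norm_lt {d : ℕ} (x : Euc d) (t : ℝ) (ht : 0 < t) (h : ∀ i, |x i| ≤ t) :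
    ‖x‖ < (d + 1) * t := by
  have h1 : ‖x‖ ^ 2 ≤ d * t ^ 2 := by
    rw [EuclideanSpace.norm_sq_eq]
    calc ∑ i, ‖x i‖ ^ 2 ≤ ∑ _i : Fin d, t ^ 2 := by
          apply Finset.sum_le_sum
          intro i _
          exact pow_le_pow_left₀ (norm_nonneg _) (h i) 2
      _ = d * t ^ 2 := by simp
  have hd : (0 : ℝ) ≤ d := Nat.cast_nonneg d
  apply lt_of_pow_lt_pow_left₀ 2 (by positivity)
  have : 0 < t ^ 2 := by positivity
  nlinarith [mul_nonneg hd this.le, mul_nonneg (mul_nonneg hd hd) this.le]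

lemma aux_growth {d : ℕ} {μ : Measure (Euc d)} {C₀ n : ℝ} (hg : GrowthCond μ C₀ n)
    {z : Euc d} (hz : z ∈ msupport μ) {r : ℝ} (hr : 0 < r) :
    μ (ball z r) ≤ ENNReal.ofReal C₀ * ENNReal.ofReal (r ^ n) := by
  rw [← ENNReal.ofReal_mul' (by positivity)]
  exact hg z hz r hr

lemma aux_set {d : ℕ} {μ : Measure (Euc d)} {C₀ n : ℝ} (hn : 0 < n) (hg : GrowthCond μ C₀ n)
    {z w : Euc d} (hz : z ∈ msupport μ) {K t m : ℝ} (hK : 0 < K) (ht : 0 < t) (hm : 0 ≤ m)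
    {S : Set (Euc d)} (hS : MeasurableSet S)
    (h1 : S ⊆ ball z (K * t)) (h2 : ∀ x ∈ S, t / 2 ≤ ‖x - w‖) :
    ∫⁻ x in S, ENNReal.ofReal (‖x - w‖ ^ (-(n + m))) ∂μ
      ≤ ENNReal.ofReal C₀ * ENNReal.ofReal ((2 * K) ^ n * (t / 2) ^ (-m)) := by
  calc ∫⁻ x in S, ENNReal.ofReal (‖x - w‖ ^ (-(n + m))) ∂μ
      ≤ ∫⁻ x in S, ENNReal.ofReal ((t / 2) ^ (-(n + m))) ∂μ := by
        apply setLIntegral_mono' hS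
        intro x hx
        apply ENNReal.ofReal_le_ofReal
        exact Real.rpow_le_rpow_of_nonpos (by positivity) (h2 x hx) (by linarith)
    _ = ENNReal.ofReal ((t / 2) ^ (-(n + m))) * μ S := by simp
    _ ≤ ENNReal.ofReal ((t / 2) ^ (-(n + m))) *
        (ENNReal.ofReal C₀ * ENNReal.ofReal ((K * t) ^ n)) := by
        gcongr
        exact (measure_mono h1).trans (aux_growth hg hz (by positivity))
    _ = ENNReal.ofReal C₀ * ENNReal.ofReal ((2 * K) ^ n * (t / 2) ^ (-m)) := by
        rw [mul_left_comm, ← ENNReal.ofReal_mul (by positivity)]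
        congr 2
        have : K * t = (2 * K) * (t / 2) := by ring
        rw [this, Real.mul_rpow (by positivity) (by positivity), neg_add,
          Real.rpow_add (by positivity), Real.rpow_neg (by positivity)]
        have : (t / 2) ^ n ≠ 0 := by positivity
        field_simp

lemma aux_tail {d : ℕ} {μ : Measure (Euc d)} {C₀ n : ℝ} (hn : 0 < n) (hg : GrowthCond μ C₀ n)
    {z : Euc d} (hz : z ∈ msupport μ) {t : ℝ} (ht : 0 < t) :
    ∫⁻ x in {x | t / 2 ≤ ‖x - z‖}, ENNReal.ofReal (‖x - z‖ ^ (-(n + 1))) ∂μ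
      ≤ ENNReal.ofReal C₀ * ENNReal.ofReal (2 ^ n * (4 / t)) := by
  set A : ℕ → Set (Euc d) := fun k => {x | t * 2 ^ k / 2 ≤ ‖x - z‖ ∧ ‖x - z‖ < 1 * (t * 2 ^ k)}
  have hsub : {x : Euc d | t / 2 ≤ ‖x - z‖} ⊆ ⋃ k, A k := by
    intro x hx
    have hx' : t / 2 ≤ ‖x - z‖ := hx
    obtain ⟨k, hk1, hk2⟩ := exists_nat_pow_near (x := ‖x - z‖ / (t / 2)) (y := 2)
      (by rw [le_div_iff₀ (by positivity)]; linarith) (by norm_num)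
    refine mem_iUnion.2 ⟨k, ?_, ?_⟩
    · rw [le_div_iff₀ (by positivity)] at hk1
      linarith
    · rw [div_lt_iff₀ (by positivity), pow_succ] at hk2
      linarith
  have hterm : ∀ k, ∫⁻ x in A k, ENNReal.ofReal (‖x - z‖ ^ (-(n + 1))) ∂μ
      ≤ ENNReal.ofReal C₀ * ENNReal.ofReal (2 ^ n * (2 / t) * (1 / 2) ^ k) := by
    intro k
    have hA : MeasurableSet (A k) := by
      have m1 : MeasurableSet {x : Euc d | t * 2 ^ k / 2 ≤ ‖x - z‖} :=
        measurableSet_le (by fun_prop) (by fun_prop)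
      have m2 : MeasurableSet {x : Euc d | ‖x - z‖ < 1 * (t * 2 ^ k)} :=
        measurableSet_lt (by fun_prop) (by fun_prop)
      exact m1.inter m2
    refine (aux_set hn hg hz (K := 1) (t := t * 2 ^ k) one_pos (by positivity) zero_le_one hA
      (fun x hx => by rw [mem_ball, dist_eq_norm]; exact hx.2) (fun x hx => hx.1)).trans_eq ?_
    congr 2
    rw [Real.rpow_neg (by positivity), Real.rpow_one, mul_one, mul_assoc]
    congr 1
    rw [div_pow, one_pow]
    field_simp
  calc _ ≤ ∫⁻ x in ⋃ k, A k, ENNReal.ofReal (‖x - z‖ ^ (-(n + 1))) ∂μ := lintegral_mono_set hsub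
    _ ≤ ∑' k, ∫⁻ x in A k, ENNReal.ofReal (‖x - z‖ ^ (-(n + 1))) ∂μ := lintegral_iUnion_le _ _
    _ ≤ ∑' k : ℕ, ENNReal.ofReal C₀ * ENNReal.ofReal (2 ^ n * (2 / t) * (1 / 2) ^ k) :=
        ENNReal.tsum_le_tsum hterm
    _ = _ := by
        rw [ENNReal.tsum_mul_left, ← ENNReal.ofReal_tsum_of_nonneg]
        · rw [tsum_mul_left, tsum_geometric_two]
          congr 2
          ring
        · intro k; positivity
        · exact summable_geometric_two.mul_left _

lemma aux_pt {n a b h : ℝ} (hn : 0 < n) (ha : 0 < a) (hb : 0 < b) (hh : 0 ≤ h) (hab : b ≤ a + h) :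
    a ^ (-n) ≤ b ^ (-n) + n * h * a ^ (-(n + 1)) := by
  have h1 : (a + h) ^ (-n) ≤ b ^ (-n) := Real.rpow_le_rpow_of_nonpos hb hab (by linarith)
  have h2 : a + h = a * (1 + h / a) := by field_simp
  have h0 : 0 ≤ h / a := by positivity
  have h3 : 1 - n * (h / a) ≤ (1 + h / a) ^ (-n) := by
    rw [Real.rpow_def_of_pos (by positivity)]
    have e1 := Real.add_one_le_exp (Real.log (1 + h / a) * -n)
    have e2 := Real.log_le_sub_one_of_pos (x := 1 + h / a) (by positivity)
    nlinarith
  have h4 : a ^ (-(n + 1)) = a ^ (-n) * a⁻¹ := by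
    rw [neg_add, Real.rpow_add ha, Real.rpow_neg_one]
  rw [h2, Real.mul_rpow ha.le (by positivity)] at h1
  have h5 : 0 < a ^ (-n) := by positivity
  rw [h4]
  have h6 := mul_le_mul_of_nonneg_left h3 h5.le
  have h7 : a ^ (-n) * (1 - n * (h / a)) = a ^ (-n) - n * h * (a ^ (-n) * a⁻¹) := by
    field_simp
  linarith

lemma aux_meas {d : ℕ} (Q : Cube d) : MeasurableSet Q.toSet := by
  have : Q.toSet = ⋂ i, {x : Euc d | |x i - Q.center i| ≤ Q.side / 2} := by
    ext x; simp [Cube.toSet]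
  rw [this]
  refine MeasurableSet.iInter fun i => (IsClosed.measurableSet ?_)
  exact isClosed_le (by fun_prop) (by fun_prop)

lemma aux_out {d : ℕ} {Q : Cube d} {x : Euc d} (hx : x ∉ Q.toSet) :
    Q.side / 2 ≤ ‖x - Q.center‖ := by
  simp only [Cube.toSet, mem_setOf_eq, not_forall, not_le] at hx
  obtain ⟨i, hi⟩ := hx
  have := PiLp.norm_apply_le (x - Q.center) i
  simp only [PiLp.sub_apply, Real.norm_eq_abs] at this
  linarith

lemma aux_encl {d : ℕ} (Q R : Cube d) (i : Fin d) :
    2 * |R.center i - Q.center i| + R.side ≤ (Q.encl R).side :=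
  le_trans (le_ciSup (f := fun i => 2 * |R.center i - Q.center i| + R.side)
    (Set.finite_range _).bddAbove i) (le_max_right _ _)

lemma aux_in {d : ℕ} {Q : Cube d} {x : Euc d} {t : ℝ} (ht : 0 < t) (hx : x ∈ Q.toSet)
    (hQ : Q.side / 2 ≤ t) : x ∈ ball Q.center ((d + 1) * t) := by
  rw [mem_ball, dist_eq_norm]
  exact aux_norm_lt _ _ ht fun i => by simpa using (hx i).trans hQ

/-- extended-valued half coefficient -/
def auxI {d : ℕ} (μ : Measure (Euc d)) (n : ℝ) (Q R : Cube d) : ℝ≥0∞ :=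
  ∫⁻ x in (Q.encl R).toSet \ Q.toSet, ENNReal.ofReal (‖x - Q.center‖ ^ (-n)) ∂μ

lemma auxI_eq {d : ℕ} (μ : Measure (Euc d)) (n : ℝ) (Q R : Cube d) :
    ∫ x in (Q.encl R).toSet \ Q.toSet, ‖x - Q.center‖ ^ (-n) ∂μ = (auxI μ n Q R).toReal := by
  rw [auxI, integral_eq_lintegral_of_nonneg_ae]
  · exact Eventually.of_forall fun x => by positivity
  · exact (Measurable.aestronglyMeasurable (by fun_prop))

lemma auxI_ne_top {d : ℕ} {μ : Measure (Euc d)} {C₀ n : ℝ} (hn : 0 < n) (hg : GrowthCond μ C₀ n)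
    {Q R : Cube d} (hQ : IsCube μ Q) : auxI μ n Q R ≠ ⊤ := by
  have hs : Q.side ≤ (Q.encl R).side := le_max_left _ _
  have hq := hQ.2
  have := aux_set hn hg hQ.1 (w := Q.center) (t := Q.side) (m := 0)
    (K := (d + 1) * ((Q.encl R).side / 2) / Q.side)
    (by have : 0 < (Q.encl R).side := by linarith
        positivity) hQ.2 le_rfl ((aux_meas (Q.encl R)).diff (aux_meas Q))
    (fun x hx => by
      rw [div_mul_cancel₀ _ hq.ne']
      exact aux_in (Q := Q.encl R) (by linarith) hx.1 le_rfl) (fun x hx => aux_out hx.2)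
  rw [add_zero] at this
  exact ne_top_of_le_ne_top (ENNReal.mul_ne_top ENNReal.ofReal_ne_top ENNReal.ofReal_ne_top) this

/-- the constant -/
def auxC (d : ℕ) (n C₀ : ℝ) : ℝ≥0∞ :=
  ENNReal.ofReal C₀ * ENNReal.ofReal ((2 * (d + 1)) ^ n) +
    ENNReal.ofReal C₀ * ENNReal.ofReal (n * (d + 1) * 2 ^ n * 4)

lemma auxC_ne_top (d : ℕ) (n C₀ : ℝ) : auxC d n C₀ ≠ ⊤ := by
  simp [auxC, ENNReal.mul_eq_top]

lemma aux_main {d : ℕ} {μ : Measure (Euc d)} {C₀ n : ℝ} (hn : 0 < n) (hnd : n ≤ d)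
    (hg : GrowthCond μ C₀ n) {P Q R : Cube d} (hP : IsCube μ P) (hQ : IsCube μ Q) :
    auxI μ n P R ≤ auxC d n C₀ + auxI μ n P Q + auxI μ n Q R := by
  have hd : 0 < d := by
    rcases Nat.eq_zero_or_pos d with h | h
    · subst h; simp at hnd; linarith
    · exact h
  haveI : Nonempty (Fin d) := ⟨⟨0, hd⟩⟩
  set M := (P.encl Q).side with hM
  set s := (Q.encl R).side with hs
  set L := (P.encl R).side with hL
  have hpM : P.side ≤ M := le_max_left _ _
  have hqs : Q.side ≤ s := le_max_left _ _
  have hp := hP.2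
  have hq := hQ.2
  have hM0 : 0 < M := by linarith
  have hs0 : 0 < s := by linarith
  have hLle : L ≤ M + s := by
    refine max_le (by linarith) (ciSup_le fun i => ?_)
    have h1 := aux_encl P Q i
    have h2 := aux_encl Q R i
    have h3 := abs_sub_le (R.center i) (Q.center i) (P.center i)
    linarith
  set S := (P.encl R).toSet \ (P.encl Q).toSet with hSdef
  have hSm : MeasurableSet S := (aux_meas _).diff (aux_meas _)
  have hJ : ∫⁻ x in S, ENNReal.ofReal (‖x - P.center‖ ^ (-n)) ∂μ
      ≤ auxC d n C₀ + auxI μ n Q R := by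
    rcases lt_or_ge s M with hsM | hsM
    · have := aux_set hn hg hP.1 (w := P.center) (t := M) (m := 0) (K := (d + 1))
        (by positivity) hM0 le_rfl hSm
        (fun x hx => aux_in (Q := P.encl R) hM0 hx.1 (by linarith))
        (fun x hx => aux_out (Q := P.encl Q) hx.2)
      simp only [add_zero, neg_zero, Real.rpow_zero, mul_one] at this
      exact this.trans (le_trans le_self_add le_self_add)
    · set S' := (P.encl R).toSet \ (Q.encl R).toSet with hS'def
      have hS'm : MeasurableSet S' := (aux_meas _).diff (aux_meas _)
      have h1 := aux_set hn hg hP.1 (w := Q.center) (t := s) (m := 0) (K := (d + 1))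
        (by positivity) hs0 le_rfl hS'm
        (fun x hx => aux_in (Q := P.encl R) hs0 hx.1 (by linarith))
        (fun x hx => aux_out (Q := Q.encl R) hx.2)
      simp only [add_zero, neg_zero, Real.rpow_zero, mul_one] at h1
      have h2 := aux_tail hn hg hP.1 hM0
      set h := (d + 1) * (M / 2) with hh
      have hh0 : 0 ≤ h := by positivity
      have hPQ : ‖P.center - Q.center‖ ≤ h := by
        apply le_of_lt
        apply aux_norm_lt _ _ (by positivity)
        intro i
        have := aux_encl P Q i
        rw [PiLp.sub_apply, abs_sub_comm]
        linarith
      have hQsub : ∀ x, x ∉ (P.encl Q).toSet → x ∉ Q.toSet := by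
        intro x hx hxQ
        apply hx
        intro i
        have h1 := aux_encl P Q i
        have h2 := hxQ i
        have h3 := abs_sub_le (x i) (Q.center i) (P.center i)
        change |x i - P.center i| ≤ M / 2
        linarith
      calc ∫⁻ x in S, ENNReal.ofReal (‖x - P.center‖ ^ (-n)) ∂μ
          ≤ ∫⁻ x in S, (ENNReal.ofReal (‖x - Q.center‖ ^ (-n)) +
              ENNReal.ofReal (n * h) * ENNReal.ofReal (‖x - P.center‖ ^ (-(n + 1)))) ∂μ := by
            apply setLIntegral_mono' hSm
            intro x hx
            rw [← ENNReal.ofReal_mul (by positivity), ← ENNReal.ofReal_add (by positivity)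
              (by positivity)]
            apply ENNReal.ofReal_le_ofReal
            have ha := aux_out (Q := P.encl Q) hx.2
            have hb := aux_out (hQsub x hx.2)
            have ha' : M / 2 ≤ ‖x - P.center‖ := ha
            refine aux_pt hn (by linarith) (by linarith) hh0 ?_
            have := norm_sub_le_norm_sub_add_norm_sub x P.center Q.center
            linarith
        _ = ∫⁻ x in S, ENNReal.ofReal (‖x - Q.center‖ ^ (-n)) ∂μ + ENNReal.ofReal (n * h) *
              ∫⁻ x in S, ENNReal.ofReal (‖x - P.center‖ ^ (-(n + 1))) ∂μ := by
            rw [lintegral_add_left (by fun_prop), lintegral_const_mul _ (by fun_prop)]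
        _ ≤ (auxI μ n Q R + ENNReal.ofReal C₀ * ENNReal.ofReal ((2 * (d + 1)) ^ n)) +
              ENNReal.ofReal (n * h) * (ENNReal.ofReal C₀ * ENNReal.ofReal (2 ^ n * (4 / M))) := by
            gcongr
            · refine le_trans ?_ (add_le_add_right h1 _)
              refine le_trans (lintegral_mono_set ?_) (lintegral_union_le _ _ _)
              intro x hx
              by_cases hxs : x ∈ (Q.encl R).toSet
              · exact Or.inl ⟨hxs, hQsub x hx.2⟩
              · exact Or.inr ⟨hx.1, hxs⟩
            · exact (lintegral_mono_set fun x hx => aux_out (Q := P.encl Q) hx.2).trans h2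
        _ ≤ auxC d n C₀ + auxI μ n Q R := by
            have e : n * h * (2 ^ n * (4 / M)) ≤ n * (d + 1) * 2 ^ n * 4 := by
              have e1 : n * h * (2 ^ n * (4 / M)) = n * (d + 1) * 2 ^ n * 2 := by
                rw [hh]
                field_simp
                try norm_num
              have : 0 ≤ n * (d + 1) * 2 ^ n := by positivity
              rw [e1]
              linarith
            have e2 : ENNReal.ofReal (n * h) *
                (ENNReal.ofReal C₀ * ENNReal.ofReal (2 ^ n * (4 / M))) ≤
                ENNReal.ofReal C₀ * ENNReal.ofReal (n * (d + 1) * 2 ^ n * 4) := by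
              rw [mul_left_comm, ← ENNReal.ofReal_mul (mul_nonneg hn.le hh0)]
              exact mul_le_mul_right (ENNReal.ofReal_le_ofReal e) _
            refine (add_le_add_right e2 _).trans_eq ?_
            rw [auxC]
            ring
  calc auxI μ n P R ≤ auxI μ n P Q + ∫⁻ x in S, ENNReal.ofReal (‖x - P.center‖ ^ (-n)) ∂μ := by
        refine le_trans (lintegral_mono_set ?_) (lintegral_union_le _ _ _)
        intro x hx
        by_cases hxs : x ∈ (P.encl Q).toSet
        · exact Or.inl ⟨hxs, hx.2⟩
        · exact Or.inr ⟨hx.1, hxs⟩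
    _ ≤ auxI μ n P Q + (auxC d n C₀ + auxI μ n Q R) := by gcongr
    _ = _ := by ring

lemma aux_main_real {d : ℕ} {μ : Measure (Euc d)} {C₀ n : ℝ} (hn : 0 < n) (hnd : n ≤ d)
    (hg : GrowthCond μ C₀ n) {P Q R : Cube d} (hP : IsCube μ P) (hQ : IsCube μ Q) :
    (auxI μ n P R).toReal ≤
      (auxC d n C₀).toReal + (auxI μ n P Q).toReal + (auxI μ n Q R).toReal := by
  have hC := auxC_ne_top d n C₀
  have h1 := auxI_ne_top hn hg hP (R := Q)
  have h2 := auxI_ne_top hn hg hQ (R := R)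
  rw [← ENNReal.toReal_add hC h1, ← ENNReal.toReal_add (ENNReal.add_ne_top.2 ⟨hC, h1⟩) h2]
  exact ENNReal.toReal_mono (ENNReal.add_ne_top.2 ⟨ENNReal.add_ne_top.2 ⟨hC, h1⟩, h2⟩)
    (aux_main hn hnd hg hP hQ)

/-- Quasi-triangle inequality for `δ`: `δ(P,R) ≤ C₆ + δ(P,Q) + δ(Q,R)`. -/
theorem cdelta_triangle {d : ℕ} (n C₀ : ℝ) (hn : 0 < n) (hnd : n ≤ d) :
    ∃ C₆ : ℝ, ∀ (μ : Measure (Euc d)) [IsLocallyFiniteMeasure μ], GrowthCond μ C₀ n →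
      ∀ P Q R : Cube d, IsCube μ P → IsCube μ Q → IsCube μ R →
      cdelta μ n P R ≤ C₆ + cdelta μ n P Q + cdelta μ n Q R := by
  refine ⟨(auxC d n C₀).toReal, ?_⟩
  intro μ _ hg P Q R hP hQ hR
  simp only [cdelta, auxI_eq]
  have h1 := aux_main_real hn hnd hg hP hQ (R := R)
  have h2 := aux_main_real hn hnd hg hR hQ (R := P)
  have a1 := le_max_left (auxI μ n P Q).toReal (auxI μ n Q P).toReal
  have a2 := le_max_right (auxI μ n P Q).toReal (auxI μ n Q P).toReal
  have a3 := le_max_left (auxI μ n Q R).toReal (auxI μ n R Q).toReal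
  have a4 := le_max_right (auxI μ n Q R).toReal (auxI μ n R Q).toReal
  exact max_le (by linarith) (by linarith)
end
end

section
/- Let α > 1 and β > α^n. Then for every x ∈ supp(μ) and every c > 0 there exists an (α,β)-doubling cube Q centered at x with ℓ(Q) ≥ c. -/
open MeasureTheory Metric Set Filter
open scoped ENNReal NNReal

noncomputable section

variable {d : ℕ}

/-- Existence of big doubling cubes: for `α > 1` and `β > αⁿ`, every point of the
support of `μ` is the center of arbitrarily large `(α,β)`-doubling cubes. -/
theorem exists_big_doubling_cube {d : ℕ} (n C₀ : ℝ) (hn : 0 < n) (hnd : n ≤ d)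
    (μ : Measure (Euc d)) [IsLocallyFiniteMeasure μ] (hμ : GrowthCond μ C₀ n)
    (α β : ℝ) (hα : 1 < α) (hβ : α ^ n < β) :
    ∀ x ∈ msupport μ, ∀ c : ℝ, 0 < c →
      ∃ Q : Cube d, Q.center = x ∧ c ≤ Q.side ∧ IsDoublingWith μ α β Q := by
  intro x hx c hc
  by_contra hcon
  have hα0 : 0 < α := by linarith
  have hαn : 0 < α ^ n := Real.rpow_pos_of_pos hα0 n
  have hβ0 : 0 < β := hαn.trans hβ
  have hstep : ∀ k : ℕ, ENNReal.ofReal β * μ (Cube.mk x (α ^ k * c)).toSet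
      ≤ μ (Cube.mk x (α ^ (k + 1) * c)).toSet := by
    intro k
    by_contra hlt
    apply hcon
    refine ⟨Cube.mk x (α ^ k * c), rfl, ?_, ?_⟩
    · have := one_le_pow₀ hα.le (n := k)
      show c ≤ α ^ k * c
      nlinarith
    · have h := (not_le.1 hlt).le
      have e : α * (α ^ k * c) = α ^ (k + 1) * c := by ring
      unfold IsDoublingWith Cube.dilate
      show μ (Cube.mk x (α * (α ^ k * c))).toSet ≤ _
      rw [e]
      exact h
  have hpow : ∀ k : ℕ, ENNReal.ofReal β ^ k * μ (Cube.mk x c).toSet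
      ≤ μ (Cube.mk x (α ^ k * c)).toSet := by
    intro k
    induction k with
    | zero => simp
    | succ k ih =>
      calc _ = ENNReal.ofReal β * (ENNReal.ofReal β ^ k * μ (Cube.mk x c).toSet) := by ring
        _ ≤ ENNReal.ofReal β * μ (Cube.mk x (α ^ k * c)).toSet := by gcongr
        _ ≤ _ := hstep k
  have hub : ∀ s : ℝ, 0 < s →
      μ (Cube.mk x s).toSet ≤ ENNReal.ofReal (C₀ * (((d : ℝ) + 1) * s) ^ n) := by
    intro s hs
    refine le_trans (measure_mono ?_) (hμ x hx (((d : ℝ) + 1) * s) (by positivity))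
    intro y hy
    have hy' : ∀ i, |y i - x i| ≤ s / 2 := hy
    rw [mem_ball, EuclideanSpace.dist_eq]
    rw [Real.sqrt_lt' (by positivity)]
    have h1 : ∑ i, dist (y i) (x i) ^ 2 ≤ ∑ i : Fin d, s ^ 2 := by
      apply Finset.sum_le_sum
      intro i _
      rw [Real.dist_eq]
      have := hy' i
      have h0 := abs_nonneg (y i - x i)
      gcongr
      linarith
    simp only [Finset.sum_const, Finset.card_univ, Fintype.card_fin, nsmul_eq_mul] at h1
    have hd : (0 : ℝ) ≤ d := Nat.cast_nonneg d
    have hs2 : 0 < s ^ 2 := by positivity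
    nlinarith [mul_nonneg hd hs2.le, mul_nonneg (mul_nonneg hd hd) hs2.le]
  have hm0 : 0 < μ (Cube.mk x c).toSet := by
    refine lt_of_lt_of_le (hx (c / 2) (by positivity)) (measure_mono ?_)
    intro y hy i
    rw [mem_ball, dist_eq_norm] at hy
    have := PiLp.norm_apply_le (y - x) i
    rw [Real.norm_eq_abs] at this
    exact this.trans hy.le
  have hmt : μ (Cube.mk x c).toSet ≠ ⊤ := ne_top_of_le_ne_top ENNReal.ofReal_ne_top (hub c hc)
  obtain ⟨m, hm, hmeq⟩ : ∃ m : ℝ, 0 < m ∧ μ (Cube.mk x c).toSet = ENNReal.ofReal m :=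
    ⟨(μ (Cube.mk x c).toSet).toReal, ENNReal.toReal_pos hm0.ne' hmt,
      (ENNReal.ofReal_toReal hmt).symm⟩
  have hreal : ∀ k : ℕ, (β / α ^ n) ^ k ≤ C₀ * (((d : ℝ) + 1) * c) ^ n / m := by
    intro k
    have h := (hpow k).trans (hub (α ^ k * c) (by positivity))
    rw [hmeq, ← ENNReal.ofReal_pow hβ0.le, ← ENNReal.ofReal_mul (by positivity)] at h
    have h2 := (ENNReal.ofReal_le_ofReal_iff' .. |>.1 h).resolve_right
      (not_le.2 (by positivity))
    have e : (((d : ℝ) + 1) * (α ^ k * c)) ^ n = (α ^ n) ^ k * (((d : ℝ) + 1) * c) ^ n := by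
      rw [show ((d : ℝ) + 1) * (α ^ k * c) = α ^ k * (((d : ℝ) + 1) * c) by ring,
        Real.mul_rpow (by positivity) (by positivity), ← Real.rpow_natCast α k,
        ← Real.rpow_mul hα0.le, mul_comm (k : ℝ) n, Real.rpow_mul hα0.le, Real.rpow_natCast]
    rw [e] at h2
    rw [div_pow, div_le_div_iff₀ (by positivity) hm]
    linarith
  obtain ⟨k, hk⟩ := pow_unbounded_of_one_lt (C₀ * (((d : ℝ) + 1) * c) ^ n / m)
    ((one_lt_div hαn).2 hβ)
  exact absurd (hreal k) (not_le.2 hk)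
end
end

section
/- There exist constants γ₀ > 0 and ε₁ > 0, depending only on C₀, n and d, such that the following holds. Let R₀ be a cube centered at a point of supp(μ) and let α > γ₀. For x ∈ R₀ ∩ supp(μ), write δ(x, 2R₀) := ∫_{Q' ∖ {x}} |y−x|^{-n} dμ(y), where Q' is the smallest cube centered at x containing 2R₀. If δ(x, 2R₀) > α, then there exists a (2,2^{d+1})-doubling cube Q ⊂ 2R₀ centered at x satisfying |δ(Q, 2R₀) − α| ≤ ε₁; here ε₁ does not depend on α. -/
open MeasureTheory Metric Set Filter
open scoped ENNReal NNReal

noncomputable section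

variable {d : ℕ}

/-! ### Helper lemmas -/

/-- The points of the cube centered at `x` with side `s`. -/
def qs {d : ℕ} (x : Euc d) (s : ℝ) : Set (Euc d) := (Cube.mk x s).toSet

theorem mem_qs {d : ℕ} {x y : Euc d} {s : ℝ} : y ∈ qs x s ↔ ∀ i, |y i - x i| ≤ s / 2 := Iff.rfl

theorem qs_mono {d : ℕ} {x : Euc d} {s t : ℝ} (h : s ≤ t) : qs x s ⊆ qs x t := by
  intro y hy i
  have := hy i
  simp only at this ⊢
  linarith

theorem measurableSet_qs {d : ℕ} (x : Euc d) (s : ℝ) : MeasurableSet (qs x s) := by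
  have : qs x s = ⋂ i, {y : Euc d | |y i - x i| ≤ s / 2} := by
    ext y; simp [mem_qs]
  rw [this]
  refine MeasurableSet.iInter fun i => ?_
  refine (isClosed_le ?_ continuous_const).measurableSet
  fun_prop

theorem coord_le_norm {d : ℕ} (y : Euc d) (i : Fin d) : |y i| ≤ ‖y‖ := by
  simpa using PiLp.norm_apply_le y i

theorem norm_lt_of_mem {d : ℕ} {x y : Euc d} {s : ℝ} (hs : 0 < s) (h : y ∈ qs x s) :
    y ∈ ball x ((d + 1) * s) := by
  rw [mem_ball, dist_eq_norm]
  have h1 : ‖y - x‖ ≤ d * (s / 2) := by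
    have : ‖y - x‖ ^ 2 ≤ (d * (s / 2)) ^ 2 := by
      rw [EuclideanSpace.norm_sq_eq]
      calc ∑ i, ‖(y - x) i‖ ^ 2 ≤ ∑ i : Fin d, (s / 2) ^ 2 := by
            refine Finset.sum_le_sum fun i _ => ?_
            have := h i
            simp only at this
            gcongr
            simpa using this
        _ = d * (s / 2) ^ 2 := by simp
        _ ≤ (d * (s / 2)) ^ 2 := by
            rw [mul_pow]
            gcongr
            have : d ≤ d ^ 2 := Nat.le_self_pow (by norm_num) d
            exact_mod_cast this
    exact le_of_sq_le_sq this (by positivity)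
  have : (0 : ℝ) ≤ d := by positivity
  nlinarith

theorem le_norm_of_not_mem {d : ℕ} {x y : Euc d} {s : ℝ} (h : y ∉ qs x s) :
    s / 2 ≤ ‖y - x‖ := by
  rw [mem_qs] at h
  push Not at h
  obtain ⟨i, hi⟩ := h
  have := coord_le_norm (y - x) i
  simp only [PiLp.sub_apply] at this
  linarith

theorem measure_qs_le {d : ℕ} {μ : Measure (Euc d)} {C₀ n : ℝ} (hG : GrowthCond μ C₀ n)
    {x : Euc d} (hx : x ∈ msupport μ) {s : ℝ} (hs : 0 < s) :
    μ (qs x s) ≤ ENNReal.ofReal (|C₀| * (d + 1) ^ n * s ^ n) := by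
  calc μ (qs x s) ≤ μ (ball x ((d + 1) * s)) := measure_mono fun y hy => norm_lt_of_mem hs hy
    _ ≤ ENNReal.ofReal (C₀ * ((d + 1) * s) ^ n) := hG x hx _ (by positivity)
    _ ≤ _ := by
      apply ENNReal.ofReal_le_ofReal
      rw [Real.mul_rpow (by positivity) hs.le, mul_assoc]
      gcongr
      exact le_abs_self _

theorem kernel_le {d : ℕ} {n : ℝ} (hn : 0 < n) {x y : Euc d} {s : ℝ} (hs : 0 < s)
    (h : y ∉ qs x s) : ‖y - x‖ ^ (-n) ≤ (s / 2) ^ (-n) :=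
  Real.rpow_le_rpow_of_nonpos (by positivity) (le_norm_of_not_mem h) (by linarith)

theorem kernel_meas {d : ℕ} (n : ℝ) (x : Euc d) :
    Measurable fun y : Euc d => ‖y - x‖ ^ (-n) := by fun_prop

theorem kernel_int {d : ℕ} {μ : Measure (Euc d)} {n : ℝ} (hn : 0 < n) {x : Euc d} {s t : ℝ}
    (hs : 0 < s) (hfin : μ (qs x t) < ⊤) :
    IntegrableOn (fun y : Euc d => ‖y - x‖ ^ (-n)) (qs x t \ qs x s) μ := by
  refine Measure.integrableOn_of_bounded (M := (s / 2) ^ (-n)) ?_ ?_ ?_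
  · exact ((measure_mono diff_subset).trans_lt hfin).ne
  · exact (kernel_meas n x).aestronglyMeasurable
  · refine (ae_restrict_iff' ((measurableSet_qs x t).diff (measurableSet_qs x s))).2 ?_
    refine Eventually.of_forall fun y hy => ?_
    rw [Real.norm_of_nonneg (by positivity)]
    exact kernel_le hn hs hy.2

theorem kernel_setIntegral_le {d : ℕ} {μ : Measure (Euc d)} {n : ℝ} (hn : 0 < n) {x : Euc d}
    {s t : ℝ} (hs : 0 < s) (hfin : μ (qs x t) < ⊤) :
    ∫ y in qs x t \ qs x s, ‖y - x‖ ^ (-n) ∂μ ≤ (s / 2) ^ (-n) * μ.real (qs x t) := by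
  have h := norm_setIntegral_le_of_norm_le_const (μ := μ) (s := qs x t \ qs x s)
    (f := fun y : Euc d => ‖y - x‖ ^ (-n)) (C := (s / 2) ^ (-n))
    ((measure_mono diff_subset).trans_lt hfin) (fun y hy => by
      rw [Real.norm_of_nonneg (by positivity)]
      exact kernel_le hn hs hy.2)
  refine (le_abs_self _).trans (h.trans ?_)
  gcongr
  · exact hfin.ne
  · exact diff_subset

theorem kernel_split {d : ℕ} {μ : Measure (Euc d)} {n : ℝ} (hn : 0 < n) {x : Euc d} {s t T : ℝ}
    (hs : 0 < s) (hst : s ≤ t) (htT : t ≤ T) (hfin : μ (qs x T) < ⊤) :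
    ∫ y in qs x T \ qs x s, ‖y - x‖ ^ (-n) ∂μ =
      ∫ y in qs x T \ qs x t, ‖y - x‖ ^ (-n) ∂μ + ∫ y in qs x t \ qs x s, ‖y - x‖ ^ (-n) ∂μ := by
  have hu : qs x T \ qs x s = (qs x T \ qs x t) ∪ (qs x t \ qs x s) := by
    rw [diff_union_diff_cancel (qs_mono htT) (qs_mono hst)]
  rw [hu, setIntegral_union ?_ ((measurableSet_qs x t).diff (measurableSet_qs x s))
    (kernel_int hn (hs.trans_le hst) hfin)
    (kernel_int hn hs ((measure_mono (qs_mono htT)).trans_lt hfin))]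
  exact Set.disjoint_left.2 fun y h1 h2 => h1.2 h2.1

theorem iUnion_qs {d : ℕ} (x : Euc d) (T : ℝ) {L : ℝ} (hL : 0 < L) :
    (⋃ k : ℕ, qs x T \ qs x (L / 2 ^ k)) = qs x T \ {x} := by
  ext y
  simp only [mem_iUnion, mem_diff, mem_singleton_iff]
  constructor
  · rintro ⟨k, h1, h2⟩
    refine ⟨h1, ?_⟩
    rintro rfl
    apply h2
    intro i
    simp only [sub_self, abs_zero]
    positivity
  · rintro ⟨h1, h2⟩
    have : ∃ i, y i ≠ x i := by
      by_contra! hc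
      exact h2 (PiLp.ext hc)
    obtain ⟨i, hi⟩ := this
    have hpos : 0 < |y i - x i| := abs_pos.2 (sub_ne_zero.2 hi)
    obtain ⟨k, hk⟩ := exists_pow_lt_of_lt_one (y := (1 / 2 : ℝ)) (div_pos hpos hL) (by norm_num)
    refine ⟨k, h1, fun hq => ?_⟩
    have h3 := mem_qs.1 hq i
    rw [lt_div_iff₀ hL] at hk
    have e : L / 2 ^ k = (1 / 2) ^ k * L := by
      rw [div_pow, one_pow]; ring
    rw [e] at h3
    have : 0 < (1 / 2 : ℝ) ^ k * L := by positivity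
    linarith

/-- Core statement. -/
theorem core {d : ℕ} {n C₀ : ℝ} (hn : 0 < n) (hnd : n ≤ d)
    {μ : Measure (Euc d)} (hG : GrowthCond μ C₀ n) {x : Euc d} (hx : x ∈ msupport μ)
    {L T α : ℝ} (hL : 0 < L) (hT1 : L ≤ T) (hT3 : T ≤ 3 * L)
    (hα : |C₀| * (d + 1) ^ n * (6 ^ n + 2 * 4 ^ n) < α)
    (h : ENNReal.ofReal α < ∫⁻ y in qs x T \ {x}, ENNReal.ofReal (‖y - x‖ ^ (-n)) ∂μ) :
    ∃ s, 0 < s ∧ s ≤ L ∧ μ (qs x (2 * s)) ≤ 2 ^ (d + 1) * μ (qs x s) ∧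
      |∫ y in qs x T \ qs x s, ‖y - x‖ ^ (-n) ∂μ - α| ≤ |C₀| * (d + 1) ^ n * (2 * 4 ^ n) := by
  set Θ : ℝ := |C₀| * (d + 1) ^ n with hΘ
  have hΘ0 : 0 ≤ Θ := by positivity
  have hfin : ∀ s, 0 < s → μ (qs x s) < ⊤ := fun s hs =>
    (measure_qs_le hG hx hs).trans_lt ENNReal.ofReal_lt_top
  have hreal : ∀ s, 0 < s → μ.real (qs x s) ≤ Θ * s ^ n := fun s hs =>
    ENNReal.toReal_le_of_le_ofReal (by positivity) (measure_qs_le hG hx hs)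
  set I : ℝ → ℝ := fun s => ∫ y in qs x T \ qs x s, ‖y - x‖ ^ (-n) ∂μ with hI
  set θ : ℝ → ℝ := fun s => μ.real (qs x s) * s ^ (-n) with hθ
  have hT : 0 < T := hL.trans_le hT1
  have hrn : ∀ s : ℝ, 0 < s → s ^ n * s ^ (-n) = 1 := fun s hs => by
    rw [← Real.rpow_add hs]; simp
  have hθΘ : ∀ s, 0 < s → θ s ≤ Θ := fun s hs => by
    calc θ s ≤ Θ * s ^ n * s ^ (-n) := by
          simp only [hθ]; gcongr; exact hreal s hs
      _ = Θ := by rw [mul_assoc, hrn s hs, mul_one]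
  have hθ0 : ∀ s, 0 < s → 0 ≤ θ s := fun s hs => by positivity
  have hstep : ∀ s, 0 < s → 2 * s ≤ T → I s ≤ I (2 * s) + 4 ^ n * θ (2 * s) := fun s hs h2 => by
    simp only [hI]
    rw [kernel_split hn hs (by linarith) h2 (hfin T hT)]
    gcongr
    refine (kernel_setIntegral_le hn hs (hfin _ (by positivity))).trans (le_of_eq ?_)
    have e : s / 2 = (4 : ℝ)⁻¹ * (2 * s) := by ring
    simp only [hθ]
    rw [e, Real.mul_rpow (by norm_num) (by positivity), Real.rpow_neg (by norm_num),
      Real.inv_rpow (by norm_num), inv_inv]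
    ring
  have hmono : ∀ s t, 0 < s → s ≤ t → t ≤ T → I t ≤ I s := fun s t hs hst htT => by
    simp only [hI]
    rw [kernel_split hn hs hst htT (hfin T hT)]
    have : 0 ≤ ∫ y in qs x t \ qs x s, ‖y - x‖ ^ (-n) ∂μ :=
      integral_nonneg fun y => by positivity
    linarith
  have hIL : I L ≤ 6 ^ n * Θ := by
    refine (kernel_setIntegral_le hn hL (hfin _ hT)).trans ?_
    calc (L / 2) ^ (-n) * μ.real (qs x T) ≤ (L / 2) ^ (-n) * (Θ * (3 * L) ^ n) := by
          gcongr
          refine (hreal T hT).trans ?_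
          gcongr
      _ = 6 ^ n * Θ := by
          have e : 3 * L = 6 * (L / 2) := by ring
          rw [e, Real.mul_rpow (by norm_num) (by positivity)]
          linear_combination (6 ^ n * Θ) * hrn (L / 2) (by positivity)
  have hnd' : ∀ s, 0 < s → ¬ μ (qs x (2 * s)) ≤ 2 ^ (d + 1) * μ (qs x s) →
      2 * θ s ≤ θ (2 * s) := fun s hs hn' => by
    have h1 : 2 ^ (d + 1) * μ.real (qs x s) ≤ μ.real (qs x (2 * s)) := by
      have := ENNReal.toReal_mono (hfin _ (by positivity)).ne (not_le.1 hn').le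
      simpa [Measure.real] using this
    simp only [hθ]
    rw [Real.mul_rpow (by norm_num) hs.le]
    have h2 : (2 : ℝ) ^ (-n) * 2 ^ (d + 1) ≥ 2 := by
      rw [← Real.rpow_natCast, ← Real.rpow_add (by norm_num)]
      calc (2 : ℝ) = 2 ^ (1 : ℝ) := by simp
        _ ≤ _ := by
          apply Real.rpow_le_rpow_of_exponent_le (by norm_num)
          push_cast; linarith
    calc 2 * (μ.real (qs x s) * s ^ (-n))
        ≤ (2 ^ (-n) * 2 ^ (d + 1)) * (μ.real (qs x s) * s ^ (-n)) := by gcongr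
      _ = (2 ^ (d + 1) * μ.real (qs x s)) * (2 ^ (-n) * s ^ (-n)) := by ring
      _ ≤ _ := by gcongr
  set σ : ℕ → ℝ := fun k => L / 2 ^ k with hσ
  have hσ0 : ∀ k, 0 < σ k := fun k => by positivity
  have hσs : ∀ k, 2 * σ (k + 1) = σ k := fun k => by simp only [hσ]; field_simp; ring
  have hσa : Antitone σ := antitone_nat_of_succ_le fun k => by linarith [hσs k, hσ0 (k + 1)]
  have hσL : ∀ k, σ k ≤ L := fun k => by simpa [hσ] using hσa (Nat.zero_le k)
  have hσz : σ 0 = L := by simp [hσ]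
  have hex : ∃ k, α < I (σ k) := by
    rw [← iUnion_qs x T hL, setLIntegral_iUnion_of_directed] at h
    · obtain ⟨k, hk⟩ := lt_iSup_iff.1 h
      refine ⟨k, ?_⟩
      rw [← ofReal_integral_eq_lintegral_ofReal (kernel_int hn (hσ0 k) (hfin T hT))
        (Eventually.of_forall fun y => by positivity)] at hk
      exact (ENNReal.ofReal_lt_ofReal_iff_of_nonneg
        (le_trans (by positivity) hα.le)).1 hk
    · refine directed_of_isDirected_le fun i j hij => ?_
      exact diff_subset_diff_right (qs_mono (hσa hij))
  have hpot : ∀ j, (∃ m ≤ j, μ (qs x (2 * σ m)) ≤ 2 ^ (d + 1) * μ (qs x (σ m)) ∧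
      I (σ j) + 2 * 4 ^ n * θ (σ j) ≤ I (σ m) + 2 * 4 ^ n * θ (σ m)) ∨
      I (σ j) + 2 * 4 ^ n * θ (σ j) ≤ I L + 2 * 4 ^ n * θ L := by
    intro j
    induction j with
    | zero => right; rw [hσz]
    | succ j ih =>
      by_cases hdb : μ (qs x (2 * σ (j + 1))) ≤ 2 ^ (d + 1) * μ (qs x (σ (j + 1)))
      · exact Or.inl ⟨j + 1, le_rfl, hdb, le_rfl⟩
      · have h1 := hnd' _ (hσ0 _) hdb
        have h2 := hstep _ (hσ0 (j + 1)) (by rw [hσs]; exact (hσL j).trans hT1)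
        rw [hσs] at h1 h2
        have h3 : I (σ (j + 1)) + 2 * 4 ^ n * θ (σ (j + 1)) ≤
            I (σ j) + 2 * 4 ^ n * θ (σ j) := by
          have : (0 : ℝ) < 4 ^ n := by positivity
          nlinarith
        rcases ih with ⟨m, hm, hd1, hd2⟩ | ih
        · exact Or.inl ⟨m, by omega, hd1, h3.trans hd2⟩
        · exact Or.inr (h3.trans ih)
  classical
  have h4 : (0 : ℝ) < 4 ^ n := by positivity
  have hk := Nat.find_spec hex
  have hmin := fun m => Nat.find_min (H := hex) (m := m)
  set k := Nat.find hex
  have hk0 : k ≠ 0 := by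
    intro h0
    rw [h0, hσz] at hk
    nlinarith
  obtain ⟨p, hp⟩ := Nat.exists_eq_succ_of_ne_zero hk0
  have hup : I (σ k) ≤ α + 4 ^ n * Θ := by
    have h1 := not_lt.1 (hmin p (by omega))
    have h2 := hstep _ (hσ0 (p + 1)) (by rw [hσs]; exact (hσL p).trans hT1)
    rw [hσs] at h2
    rw [hp]
    have := hθΘ _ (hσ0 p)
    have : 4 ^ n * θ (σ p) ≤ 4 ^ n * Θ := by gcongr
    exact h2.trans (by linarith)
  have hk4 : 0 ≤ 2 * 4 ^ n * θ (σ k) := by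
    have := hθ0 _ (hσ0 k); positivity
  rcases hpot k with ⟨m, hm, hd1, hd2⟩ | hbad
  · refine ⟨σ m, hσ0 m, hσL m, hd1, ?_⟩
    have h1 := hmono _ _ (hσ0 k) (hσa hm) ((hσL m).trans hT1)
    have h2 : 2 * 4 ^ n * θ (σ m) ≤ 2 * 4 ^ n * Θ := by
      have := hθΘ _ (hσ0 m)
      gcongr
    change |I (σ m) - α| ≤ _
    rw [abs_le]
    constructor <;> nlinarith
  · exfalso
    have h2 : 2 * 4 ^ n * θ L ≤ 2 * 4 ^ n * Θ := by
      have := hθΘ _ hL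
      gcongr
    nlinarith

/-- Precise existence of small doubling cubes: if `δ(x, 2R₀) > α > γ₀`, there is a
doubling cube `Q ⊂ 2R₀` centered at `x` with `|δ(Q,2R₀) − α| ≤ ε₁`, where `ε₁` does
not depend on `α`. -/
theorem exists_doubling_cube_prescribed_delta {d : ℕ} (n C₀ : ℝ)
    (hn : 0 < n) (hnd : n ≤ d) :
    ∃ γ₀ ε₁ : ℝ, 0 < γ₀ ∧ 0 < ε₁ ∧
      ∀ (μ : Measure (Euc d)) [IsLocallyFiniteMeasure μ], GrowthCond μ C₀ n →
      ∀ R₀ : Cube d, IsCube μ R₀ → ∀ α : ℝ, γ₀ < α →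
      ∀ x ∈ R₀.toSet ∩ msupport μ,
        ENNReal.ofReal α < deltaPt μ n x (R₀.dilate 2) →
        ∃ Q : Cube d, Q.center = x ∧ 0 < Q.side ∧ Q.toSet ⊆ (R₀.dilate 2).toSet ∧
          IsDoubling μ Q ∧ |cdelta μ n Q (R₀.dilate 2) - α| ≤ ε₁ := by
  have hd : 0 < d := by
    have : (0 : ℝ) < d := hn.trans_le hnd
    exact_mod_cast this
  haveI : Nonempty (Fin d) := ⟨⟨0, hd⟩⟩
  refine ⟨|C₀| * (d + 1) ^ n * (6 ^ n + 2 * 4 ^ n) + 1, |C₀| * (d + 1) ^ n * (2 * 4 ^ n) + 1,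
    by positivity, by positivity, ?_⟩
  intro μ _ hG R₀ hR α hα x hx hδ
  obtain ⟨c, L⟩ := R₀
  obtain ⟨hxR, hxs⟩ := hx
  have hL : 0 < L := hR.2
  have hxR' : ∀ i, |x i - c i| ≤ L / 2 := hxR
  set T : ℝ := ⨆ i, 2 * |c i - x i| + 2 * L with hT
  have hTi : ∀ i, 2 * |c i - x i| + 2 * L ≤ T := fun i =>
    le_ciSup (f := fun i => 2 * |c i - x i| + 2 * L) (Set.finite_range _).bddAbove i
  have hT2 : 2 * L ≤ T := by
    have := hTi ⟨0, hd⟩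
    have := abs_nonneg (c ⟨0, hd⟩ - x ⟨0, hd⟩)
    linarith
  have hT3 : T ≤ 3 * L := ciSup_le fun i => by
    have := hxR' i
    rw [abs_sub_comm] at this
    linarith
  have hδ' : ENNReal.ofReal α < ∫⁻ y in qs x T \ {x}, ENNReal.ofReal (‖y - x‖ ^ (-n)) ∂μ := by
    have e : ((Cube.mk x 0).encl ((Cube.mk c L).dilate 2)).toSet = qs x T := by
      simp only [Cube.encl, Cube.dilate, qs]
      rw [max_eq_right (by rw [← hT]; linarith)]
    unfold deltaPt at hδ
    rwa [e] at hδ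
  obtain ⟨s, hs, hsL, hdb, hI⟩ := core hn hnd hG hxs hL (by linarith) hT3 (by linarith) hδ'
  refine ⟨⟨x, s⟩, rfl, hs, ?_, hdb, ?_⟩
  · intro y hy i
    have h1 := hy i
    have h2 := hxR' i
    have h3 := abs_sub_le (y i) (x i) (c i)
    simp only [Cube.dilate] at h1 ⊢
    linarith
  · have e1 : ((Cube.mk x s).encl ((Cube.mk c L).dilate 2)).toSet = qs x T := by
      simp only [Cube.encl, Cube.dilate, qs]
      rw [max_eq_right (by rw [← hT]; linarith)]
    have e2 : (((Cube.mk c L).dilate 2).encl (Cube.mk x s)).toSet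
        = ((Cube.mk c L).dilate 2).toSet := by
      simp only [Cube.encl, Cube.dilate]
      rw [max_eq_left]
      exact ciSup_le fun i => by linarith [hxR' i]
    unfold cdelta
    rw [e1, e2, diff_self, Measure.restrict_empty, integral_zero_measure]
    rw [max_eq_left (integral_nonneg fun y => by positivity)]
    exact hI.trans (by linarith)
end
end

section
/- Call a cube Q with 0 < ℓ(Q) < ∞ a transit cube. For x ∈ supp(μ) and a cube Q containing x, set δ(x,Q) := ∫_{Q_x ∖ {x}} |y−x|^{-n} dμ(y), where Q_x is the smallest cube centered at x containing Q; and for a cube Q set δ(Q, ℝ^d) := ∫_{ℝ^d ∖ Q} |y−z_Q|^{-n} dμ(y). Then: (i) if δ(x,Q) < ∞ for some transit cube Q containing x, then δ(x,Q') < ∞ for every transit cube Q' containing x; and (ii) if δ(Q, ℝ^d) < ∞ for some transit cube Q, then δ(Q', ℝ^d) < ∞ for every transit cube Q'. -/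
open MeasureTheory Metric Set Filter
open scoped ENNReal NNReal

noncomputable section

variable {d : ℕ}

lemma Cube.isClosed_toSet' {d : ℕ} (Q : Cube d) : IsClosed Q.toSet := by
  have h : Q.toSet = ⋂ i, {x : Euc d | |x i - Q.center i| ≤ Q.side / 2} := by
    ext x; simp [Cube.toSet]
  rw [h]
  exact isClosed_iInter fun i => isClosed_le (by fun_prop) continuous_const

lemma Cube.lt_norm_of_notMem {d : ℕ} (Q : Cube d) {y : Euc d} (hy : y ∉ Q.toSet) :
    Q.side / 2 < ‖y - Q.center‖ := by
  simp only [Cube.toSet, mem_setOf_eq, not_forall, not_le] at hy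
  obtain ⟨i, hi⟩ := hy
  have := PiLp.norm_apply_le (y - Q.center) i
  simp only [PiLp.sub_apply, Real.norm_eq_abs] at this
  linarith

lemma Cube.exists_subset_closedBall {d : ℕ} (Q : Cube d) (z : Euc d) :
    ∃ R, Q.toSet ⊆ closedBall z R := by
  have h : Q.toSet ⊆ closedBall Q.center (Real.sqrt (∑ _i : Fin d, (Q.side / 2) ^ 2)) := by
    intro x hx
    rw [mem_closedBall, EuclideanSpace.dist_eq]
    refine Real.sqrt_le_sqrt (Finset.sum_le_sum fun i _ => ?_)
    rw [Real.dist_eq]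
    exact pow_le_pow_left₀ (abs_nonneg _) (hx i) 2
  exact (isBounded_closedBall.subset h).subset_closedBall z

/-- The far-from-center part of a bounded set contributes finitely much. -/
lemma lintegral_bounded_diff_lt_top {d : ℕ} {n : ℝ} (hn : 0 < n) (μ : Measure (Euc d))
    [IsLocallyFiniteMeasure μ] (Q : Cube d) (hQ : 0 < Q.side) (z : Euc d) (R : ℝ) :
    ∫⁻ y in closedBall z R \ Q.toSet, ENNReal.ofReal (‖y - Q.center‖ ^ (-n)) ∂μ < ⊤ := by
  have hm : MeasurableSet (closedBall z R \ Q.toSet) :=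
    isClosed_closedBall.measurableSet.diff Q.isClosed_toSet'.measurableSet
  calc _ ≤ ∫⁻ _y in closedBall z R \ Q.toSet, ENNReal.ofReal ((Q.side / 2) ^ (-n)) ∂μ := by
        refine setLIntegral_mono' hm fun y hy => ENNReal.ofReal_le_ofReal ?_
        exact Real.rpow_le_rpow_of_nonpos (by linarith) (Q.lt_norm_of_notMem hy.2).le (by linarith)
    _ = ENNReal.ofReal ((Q.side / 2) ^ (-n)) * μ (closedBall z R \ Q.toSet) := by
        rw [setLIntegral_const]
    _ < ⊤ := ENNReal.mul_lt_top ENNReal.ofReal_lt_top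
        ((measure_mono diff_subset).trans_lt (isCompact_closedBall z R).measure_lt_top)

/-- Finiteness of `δ(x,Q)` (resp. `δ(Q,ℝ^d)`) does not depend on the chosen transit
cube: (i) if `δ(x,Q) < ∞` for some transit cube `Q ∋ x` then `δ(x,Q') < ∞` for every
transit cube `Q' ∋ x`; (ii) if `δ(Q,ℝ^d) < ∞` for some transit cube `Q` then
`δ(Q',ℝ^d) < ∞` for every transit cube `Q'`. -/
theorem stopping_and_initial_independent_of_cube {d : ℕ} (n C₀ : ℝ)
    (hn : 0 < n) (hnd : n ≤ d)
    (μ : Measure (Euc d)) [IsLocallyFiniteMeasure μ] (hμ : GrowthCond μ C₀ n) :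
    (∀ x ∈ msupport μ, ∀ Q Q' : Cube d, IsCube μ Q → IsCube μ Q' →
      x ∈ Q.toSet → x ∈ Q'.toSet →
      deltaPt μ n x Q < ⊤ → deltaPt μ n x Q' < ⊤) ∧
    (∀ Q Q' : Cube d, IsCube μ Q → IsCube μ Q' →
      deltaFull μ n Q < ⊤ → deltaFull μ n Q' < ⊤) := by
  have hd : 0 < d := by
    have : (0 : ℝ) < d := lt_of_lt_of_le hn hnd
    exact_mod_cast this
  constructor
  · intro x _ Q Q' hQ hQ' _ _ h
    set A := (Cube.mk x 0).encl Q with hA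
    have hAs : 0 < A.side := by
      refine lt_of_lt_of_le ?_ (le_max_right _ _)
      refine lt_of_lt_of_le ?_ (le_ciSup (Set.finite_range _).bddAbove (⟨0, hd⟩ : Fin d))
      have := hQ.2
      positivity
    obtain ⟨R, hR⟩ := ((Cube.mk x 0).encl Q').exists_subset_closedBall x
    have hsub : ((Cube.mk x 0).encl Q').toSet \ {x} ⊆
        (A.toSet \ {x}) ∪ (closedBall x R \ A.toSet) := by
      intro y hy
      by_cases hyA : y ∈ A.toSet
      · exact Or.inl ⟨hyA, hy.2⟩
      · exact Or.inr ⟨hR hy.1, hyA⟩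
    refine ((lintegral_mono_set hsub).trans (lintegral_union_le _ _ _)).trans_lt ?_
    exact ENNReal.add_lt_top.2 ⟨h, lintegral_bounded_diff_lt_top hn μ A hAs x R⟩
  · intro Q Q' hQ hQ' h
    obtain ⟨R₀, hR₀⟩ := Q.exists_subset_closedBall Q'.center
    set R := max R₀ ‖Q.center - Q'.center‖ with hR
    have hsub : Q'.toSetᶜ ⊆
        (closedBall Q'.center R \ Q'.toSet) ∪ (closedBall Q'.center R)ᶜ := by
      intro y hy
      by_cases hyA : y ∈ closedBall Q'.center R
      · exact Or.inl ⟨hyA, hy⟩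
      · exact Or.inr hyA
    refine ((lintegral_mono_set hsub).trans (lintegral_union_le _ _ _)).trans_lt ?_
    refine ENNReal.add_lt_top.2
      ⟨lintegral_bounded_diff_lt_top hn μ Q' hQ'.2 _ R, ?_⟩
    have hsub2 : (closedBall Q'.center R)ᶜ ⊆ Q.toSetᶜ :=
      compl_subset_compl.2 (hR₀.trans (closedBall_subset_closedBall (le_max_left _ _)))
    calc ∫⁻ y in (closedBall Q'.center R)ᶜ, ENNReal.ofReal (‖y - Q'.center‖ ^ (-n)) ∂μ
        ≤ ∫⁻ y in (closedBall Q'.center R)ᶜ,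
            ENNReal.ofReal (2 ^ n) * ENNReal.ofReal (‖y - Q.center‖ ^ (-n)) ∂μ := by
          refine setLIntegral_mono' isClosed_closedBall.measurableSet.compl fun y hy => ?_
          rw [← ENNReal.ofReal_mul (by positivity)]
          refine ENNReal.ofReal_le_ofReal ?_
          have hyR : R < ‖y - Q'.center‖ := by
            simpa [dist_eq_norm] using hy
          have h1 : ‖Q.center - Q'.center‖ < ‖y - Q'.center‖ :=
            (le_max_right _ _).trans_lt hyR
          have hpos : 0 < ‖y - Q.center‖ := by
            have := Q.lt_norm_of_notMem (hsub2 hy)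
            have := hQ.2
            linarith
          have h2 : ‖y - Q.center‖ / 2 ≤ ‖y - Q'.center‖ := by
            have h3 := norm_sub_le_norm_sub_add_norm_sub y Q'.center Q.center
            rw [norm_sub_rev Q'.center] at h3
            linarith
          calc ‖y - Q'.center‖ ^ (-n) ≤ (‖y - Q.center‖ / 2) ^ (-n) :=
                Real.rpow_le_rpow_of_nonpos (by linarith) h2 (by linarith)
            _ = 2 ^ n * ‖y - Q.center‖ ^ (-n) := by
                rw [Real.div_rpow hpos.le (by norm_num), Real.rpow_neg (by norm_num : (0:ℝ) ≤ 2)]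
                field_simp
      _ = ENNReal.ofReal (2 ^ n) *
            ∫⁻ y in (closedBall Q'.center R)ᶜ, ENNReal.ofReal (‖y - Q.center‖ ^ (-n)) ∂μ :=
          lintegral_const_mul' _ _ ENNReal.ofReal_ne_top
      _ < ⊤ := ENNReal.mul_lt_top ENNReal.ofReal_lt_top
          ((lintegral_mono_set hsub2).trans_lt h)
end
end
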